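/- arXiv:1309.6423 — 2 statements merged into one kernel-verified Lean document; each statement's English description precedes it below -/
import Mathlib

section
/- Berkson–Porta theorem (generation direction): let τ be a point of the closed unit disk and let p : 𝔻 → ℂ be holomorphic with Re p(z) ≥ 0 for all z ∈ 𝔻; set G(z) = (z − τ)(conj(τ)·z − 1)·p(z). Then G is semicomplete: for every z ∈ 𝔻 the initial value problem w'(t) = G(w(t)), w(0) = z has a unique solution w_z : [0, ∞) → 𝔻, and the family φ_t(z) := w_z(t) is a one-parameter semigroup of holomorphic self-maps of 𝔻 (each φ_t is holomorphic 𝔻 → 𝔻, φ₀ = id, φ_{t+s} = φ_s ∘ φ_t, and t ↦ φ_t is continuous for locally uniform convergence). -/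
open Complex Metric Set

noncomputable section

/-- The Berkson–Porta vector field `G(z) = (z − τ)(conj(τ)z − 1) p(z)`. -/
def berksonPortaField (τ : ℂ) (p : ℂ → ℂ) (z : ℂ) : ℂ :=
  (z - τ) * ((starRingEnd ℂ) τ * z - 1) * p z

/-!
The field `G = berksonPortaField τ p` infinitesimally contracts the hyperbolic metric
`|dz| / (1 - |z|²)`: with `A = |z - τ|` and `B = |conj τ * z - 1|`, the Schwarz–Pick inequality
`(1 - |z|²) |p' z| ≤ 2 Re (p z)` gives
`2 Re (conj z * G z) + (1 - |z|²) Re (G' z) ≤ -(A - B)² Re (p z) ≤ 0`.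
Hence the hyperbolic speed `|G w| / (1 - |w|²)` does not increase along a solution `w`, so
`|G w| ≤ C (1 - |w|²)` and `1 - |w|²` decays at most exponentially: on a bounded time interval a
solution stays in a compact subset of the disk, and therefore it exists for all times.

The flow `φ` of a holomorphic field is holomorphic because `u t = φ t a - φ t z` solves the
scalar linear equation `u' = q u`, where `q t` is the difference quotient of `G` between `φ t z`
and `φ t a`. So the difference quotient of `φ T` between `z` and `a` is `exp (∫ t in 0..T, q t)`,
which tends to `exp (∫ t in 0..T, G' (φ t z))` as `a → z`.
-/

open Filter
open scoped Topology NNReal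

section Trajectories

variable {E : Type*} [NormedAddCommGroup E] [NormedSpace ℝ E] {f g : E → E} {U s : Set E} {S T : ℝ}
  {v w : ℝ → E}

/-- `w` solves the autonomous equation `w' = f w` on `[0, T]` and stays in `U`. -/
structure IsTrajectory (f : E → E) (U : Set E) (T : ℝ) (w : ℝ → E) : Prop where
  isIntegralCurveOn : IsIntegralCurveOn w (fun _ ↦ f) (Icc 0 T)
  mapsTo : MapsTo w (Icc 0 T) U

namespace IsTrajectory

lemma mono (hw : IsTrajectory f U T w) (hS : S ≤ T) : IsTrajectory f U S w where
  isIntegralCurveOn := hw.isIntegralCurveOn.mono (Icc_subset_Icc_right hS)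
  mapsTo := hw.mapsTo.mono_left (Icc_subset_Icc_right hS)

lemma restrict (hw : IsTrajectory f U T w) (hws : MapsTo w (Icc 0 T) s) : IsTrajectory f s T w where
  isIntegralCurveOn := hw.isIntegralCurveOn
  mapsTo := hws

lemma mono_set (hw : IsTrajectory f s T w) (hsU : s ⊆ U) : IsTrajectory f U T w :=
  hw.restrict (hw.mapsTo.mono_right hsU)

lemma congr (hw : IsTrajectory f U T w) (hfg : EqOn f g U) : IsTrajectory g U T w where
  isIntegralCurveOn t ht := by simpa only [hfg (hw.mapsTo ht)] using hw.isIntegralCurveOn t ht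
  mapsTo := hw.mapsTo

lemma congr_curve (hw : IsTrajectory f U T w) (hvw : EqOn v w (Icc 0 T)) :
    IsTrajectory f U T v where
  isIntegralCurveOn t ht := by
    rw [hvw ht]
    exact (hw.isIntegralCurveOn t ht).congr hvw (hvw ht)
  mapsTo := hw.mapsTo.congr hvw.symm

lemma continuousOn (hw : IsTrajectory f U T w) : ContinuousOn w (Icc 0 T) :=
  hw.isIntegralCurveOn.continuousOn

lemma hasDerivWithinAt_Ici (hw : IsTrajectory f U T w) {t : ℝ} (ht : t ∈ Ico 0 T) :
    HasDerivWithinAt w (f (w t)) (Ici t) t :=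
  (hw.isIntegralCurveOn t (Ico_subset_Icc_self ht)).mono_of_mem_nhdsWithin
    (Icc_mem_nhdsGE_of_mem ht)

lemma comp_add_const (hw : IsTrajectory f U (T + S) w) (hS : 0 ≤ S) :
    IsTrajectory f U T fun t ↦ w (t + S) := by
  have hshift : MapsTo (· + S) (Icc 0 T) (Icc 0 (T + S)) := fun t ht ↦
    ⟨add_nonneg ht.1 hS, add_le_add_left ht.2 S⟩
  refine ⟨(hw.isIntegralCurveOn.comp_add S).mono fun t ht ↦ ?_, hw.mapsTo.comp hshift⟩
  simpa only [mem_vadd_set_iff_neg_vadd_mem, neg_neg, vadd_eq_add, add_comm S] using hshift ht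

lemma reverse (hw : IsTrajectory f U T w) : IsTrajectory (-f) U T fun t ↦ w (T - t) := by
  have hreverse : MapsTo (T - ·) (Icc 0 T) (Icc 0 T) := fun t ht ↦
    ⟨sub_nonneg.2 ht.2, sub_le_self T ht.1⟩
  refine ⟨fun t ht ↦ ?_, hw.mapsTo.comp hreverse⟩
  simpa [Function.comp_def] using (hw.isIntegralCurveOn _ (hreverse ht)).scomp t
    ((hasDerivWithinAt_id t (Icc 0 T)).const_sub T) hreverse

lemma dist_le {K : ℝ≥0} (hK : LipschitzOnWith K f s) (hv : IsTrajectory f s T v)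
    (hw : IsTrajectory f s T w) {t : ℝ} (ht : t ∈ Icc 0 T) :
    dist (v t) (w t) ≤ dist (v 0) (w 0) * Real.exp (K * t) := by
  simpa using dist_le_of_trajectories_ODE_of_mem (fun _ _ ↦ hK) hv.continuousOn
    (fun _ ↦ hv.hasDerivWithinAt_Ici) (hv.mapsTo.mono_left Ico_subset_Icc_self) hw.continuousOn
    (fun _ ↦ hw.hasDerivWithinAt_Ici) (hw.mapsTo.mono_left Ico_subset_Icc_self) le_rfl t ht

lemma eqOn (hf : LocallyLipschitzOn U f) (hv : IsTrajectory f U T v) (hw : IsTrajectory f U T w)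
    (h₀ : v 0 = w 0) : EqOn v w (Icc 0 T) := by
  have hcompact : IsCompact (v '' Icc 0 T ∪ w '' Icc 0 T) :=
    (isCompact_Icc.image_of_continuousOn hv.continuousOn).union
      (isCompact_Icc.image_of_continuousOn hw.continuousOn)
  obtain ⟨K, hK⟩ := LocallyLipschitzOn.exists_lipschitzOnWith_of_compact hcompact
    (hf.mono (union_subset hv.mapsTo.image_subset hw.mapsTo.image_subset))
  intro t ht
  have hdist := dist_le hK
    (hv.restrict fun u hu ↦ .inl (mem_image_of_mem v hu))
    (hw.restrict fun u hu ↦ .inr (mem_image_of_mem w hu)) ht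
  rw [h₀, dist_self, zero_mul] at hdist
  exact dist_le_zero.1 hdist

end IsTrajectory

lemma exists_isTrajectory_univ_of_lipschitzWith [CompleteSpace E] {K L : ℝ≥0}
    (hf : LipschitzWith K f) (hL : ∀ x, ‖f x‖ ≤ L) (x : E) (hT : 0 ≤ T) :
    ∃ w, w 0 = x ∧ IsTrajectory f univ T w := by
  have hpicard : IsPicardLindelof (fun _ ↦ f) (tmin := 0) (tmax := T) ⟨0, le_rfl, hT⟩ x
      (L * T.toNNReal) 0 L K :=
    { lipschitzOnWith := fun _ _ ↦ hf.lipschitzOnWith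
      continuousOn := fun _ _ ↦ continuousOn_const
      norm_le := fun _ _ y _ ↦ hL y
      mul_max_le := by simp [hT] }
  obtain ⟨w, hw₀, hw⟩ := hpicard.exists_eq_forall_mem_Icc_hasDerivWithinAt₀
  exact ⟨w, hw₀, hw, mapsTo_univ _ _⟩

lemma locallyLipschitzOn_of_contDiffOn (hU : IsOpen U) (hf : ContDiffOn ℝ 1 f U) :
    LocallyLipschitzOn U f := by
  intro x hx
  obtain ⟨K, t, ht, hK⟩ := (hf.contDiffAt (hU.mem_nhds hx)).exists_lipschitzOnWith
  exact ⟨K, t, mem_nhdsWithin_of_mem_nhds ht, hK⟩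

lemma exists_lipschitzWith_bounded_eventuallyEq [FiniteDimensional ℝ E] {K : Set E}
    (hU : IsOpen U) (hf : ContDiffOn ℝ 1 f U) (hK : IsCompact K) (hKU : K ⊆ U) :
    ∃ g : E → E, ∃ C L : ℝ≥0, LipschitzWith C g ∧ (∀ x, ‖g x‖ ≤ L) ∧ g =ᶠ[𝓝ˢ K] f := by
  obtain ⟨K', hK', hKK', hK'U⟩ := exists_compact_between hK hU hKU
  obtain ⟨χ, hχ₁, hχ₀, -⟩ := exists_contMDiffMap_one_nhds_of_subset_interior
    (I := modelWithCornersSelf ℝ E) (n := 1) hK.isClosed hKK'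
  have hχ : ContDiff ℝ 1 χ := χ.contMDiff.contDiff
  have hsupp : HasCompactSupport fun x ↦ χ x • f x :=
    HasCompactSupport.intro hK' fun x hx ↦ by simp [hχ₀ x hx]
  have hsmooth : ContDiff ℝ 1 fun x ↦ χ x • f x := by
    refine contDiff_iff_contDiffAt.2 fun x ↦ ?_
    by_cases hx : x ∈ U
    · exact hχ.contDiffAt.smul (hf.contDiffAt (hU.mem_nhds hx))
    · have hzero : (fun x ↦ χ x • f x) =ᶠ[𝓝 x] fun _ ↦ 0 := by
        filter_upwards [hK'.isClosed.isOpen_compl.mem_nhds fun h ↦ hx (hK'U h)] with y hy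
        simp [hχ₀ y hy]
      exact contDiffAt_const.congr_of_eventuallyEq hzero
  obtain ⟨C, hC⟩ := hsmooth.lipschitzWith_of_hasCompactSupport hsupp one_ne_zero
  obtain ⟨L, hL⟩ := hsupp.exists_bound_of_continuous hsmooth.continuous
  refine ⟨_, C, L.toNNReal, hC, fun x ↦ (hL x).trans (Real.le_coe_toNNReal L), ?_⟩
  filter_upwards [hχ₁] with x hx
  rw [hx, one_smul]

/-- Every solution of `w' = f w` that starts in `U` exists for all positive times and stays
in `U`. -/
def IsSemicomplete (f : E → E) (U : Set E) : Prop :=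
  ∀ x ∈ U, ∀ T, 0 ≤ T → ∃ w, w 0 = x ∧ IsTrajectory f U T w

/-- Let `w` solve the equation of a Lipschitz cutoff of `f` that agrees with `f` near `K`. As long
as `w` stays in `K` it solves the equation of `f` slightly longer, so `htrap` keeps it in `K`. -/
theorem isSemicomplete_of_forall_exists_isCompact [FiniteDimensional ℝ E] (hU : IsOpen U)
    (hf : ContDiffOn ℝ 1 f U)
    (htrap : ∀ x ∈ U, ∀ T, ∃ K ⊆ U, IsCompact K ∧
      ∀ S ∈ Icc 0 T, ∀ w, w 0 = x → IsTrajectory f U S w → w S ∈ K) :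
    IsSemicomplete f U := by
  intro x hx T hT
  obtain ⟨K, hKU, hK, hmem⟩ := htrap x hx T
  have hxKU : insert x K ⊆ U := insert_subset hx hKU
  obtain ⟨g, C, L, hgC, hgL, hgf⟩ :=
    exists_lipschitzWith_bounded_eventuallyEq hU hf (hK.insert x) hxKU
  obtain ⟨V, hV, hxKV, hVg⟩ := mem_nhdsSet_iff_exists.1 (hgf.and (hU.mem_nhdsSet.2 hxKU))
  obtain ⟨w, hw₀, hw⟩ := exists_isTrajectory_univ_of_lipschitzWith hgC hgL x hT
  have htraj : ∀ S ≤ T, MapsTo w (Icc 0 S) V → IsTrajectory f U S w := fun S hS hwV ↦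
    (((hw.mono hS).restrict hwV).congr fun y hy ↦ (hVg hy).1).mono_set fun y hy ↦ (hVg hy).2
  have hstay : Icc 0 T ⊆ w ⁻¹' insert x K := by
    refine IsClosed.Icc_subset_of_forall_mem_nhdsGT_of_Icc_subset ?_ (by simp [hw₀])
      fun t ht hsub ↦ ?_
    · rw [inter_comm]
      exact hw.continuousOn.preimage_isClosed_of_isClosed isClosed_Icc (hK.insert x).isClosed
    · have hnear : ∀ᶠ u in 𝓝[Icc 0 T] t, w u ∈ V :=
        hw.continuousOn t (Ico_subset_Icc_self ht)
          (hV.mem_nhds (hxKV (hsub (right_mem_Icc.2 ht.1))))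
      have hright := hnear.filter_mono (nhdsWithin_le_of_mem (Icc_mem_nhdsGE_of_mem ht))
      obtain ⟨u, htu, huV⟩ := mem_nhdsGE_iff_exists_Icc_subset.1 hright
      filter_upwards [Ioc_mem_nhdsGT (lt_min htu ht.2)] with r hr
      have hrT := hr.2.trans (min_le_right _ _)
      refine .inr (hmem r ⟨ht.1.trans hr.1.le, hrT⟩ w hw₀ (htraj r hrT fun q hq ↦ ?_))
      rcases le_total q t with hqt | htq
      · exact hxKV (hsub ⟨hq.1, hqt⟩)
      · exact huV ⟨htq, hq.2.trans (hr.2.trans (min_le_left _ _))⟩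
  exact ⟨w, hw₀, htraj T le_rfl fun t ht ↦ hxKV (hstay ht)⟩

/-- `φ t x` is the value at time `t ≥ 0` of the solution in `U` of `w' = f w`, `w 0 = x`. -/
structure IsSemiflow (f : E → E) (U : Set E) (φ : ℝ → E → E) : Prop where
  map_zero : ∀ x ∈ U, φ 0 x = x
  isTrajectory : ∀ x ∈ U, ∀ T, IsTrajectory f U T (φ · x)

theorem IsSemicomplete.exists_isSemiflow (h : IsSemicomplete f U) (hf : LocallyLipschitzOn U f) :
    ∃ φ, IsSemiflow f U φ := by
  choose! W hW₀ hW using h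
  refine ⟨fun t x ↦ W x t t, fun x hx ↦ hW₀ x hx 0 le_rfl, fun x hx T ↦ ?_⟩
  rcases lt_or_ge T 0 with hT | hT
  · exact ⟨fun t ht ↦ absurd (ht.1.trans ht.2) hT.not_ge,
      fun t ht ↦ absurd (ht.1.trans ht.2) hT.not_ge⟩
  · refine (hW x hx T hT).congr_curve fun t ht ↦ ?_
    exact (hW x hx t ht.1).eqOn hf ((hW x hx T hT).mono ht.2)
      ((hW₀ x hx t ht.1).trans (hW₀ x hx T hT).symm) (right_mem_Icc.2 ht.1)

namespace IsSemiflow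

variable {φ : ℝ → E → E} {x : E} {t : ℝ}

lemma mapsTo (hφ : IsSemiflow f U φ) (ht : 0 ≤ t) : MapsTo (φ t) U U := fun x hx ↦
  (hφ.isTrajectory x hx t).mapsTo (right_mem_Icc.2 ht)

lemma eq_of_isTrajectory (hφ : IsSemiflow f U φ) (hf : LocallyLipschitzOn U f)
    (hw : IsTrajectory f U t w) (h₀ : w 0 ∈ U) (ht : 0 ≤ t) : w t = φ t (w 0) :=
  hw.eqOn hf (hφ.isTrajectory _ h₀ t) (hφ.map_zero _ h₀).symm (right_mem_Icc.2 ht)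

lemma injOn (hφ : IsSemiflow f U φ) (hf : LocallyLipschitzOn U f) (ht : 0 ≤ t) :
    InjOn (φ t) U := by
  intro x hx y hy hxy
  have hneg : LocallyLipschitzOn U (-f) := by simpa using hf
  have heq := (hφ.isTrajectory x hx t).reverse.eqOn hneg
    (hφ.isTrajectory y hy t).reverse (by simpa using hxy) (right_mem_Icc.2 ht)
  simpa [hφ.map_zero x hx, hφ.map_zero y hy] using heq

lemma map_add (hφ : IsSemiflow f U φ) (hf : LocallyLipschitzOn U f) (hx : x ∈ U) (hS : 0 ≤ S)
    (ht : 0 ≤ t) : φ (t + S) x = φ t (φ S x) := by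
  simpa using hφ.eq_of_isTrajectory hf ((hφ.isTrajectory x hx (t + S)).comp_add_const hS)
    (by simpa using hφ.mapsTo hS hx) ht

lemma hasDerivWithinAt (hφ : IsSemiflow f U φ) (hx : x ∈ U) (ht : 0 ≤ t) :
    HasDerivWithinAt (φ · x) (f (φ t x)) (Ici 0) t := by
  refine ((hφ.isTrajectory x hx (t + 1)).isIntegralCurveOn t
    ⟨ht, by simp⟩).mono_of_mem_nhdsWithin ?_
  rw [← Ici_inter_Iic]
  exact inter_mem_nhdsWithin _ (Iic_mem_nhds (lt_add_one t))

theorem exists_isCompact_eventually_mapsTo [FiniteDimensional ℝ E] (hφ : IsSemiflow f U φ)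
    (hU : IsOpen U) (hf : ContDiffOn ℝ 1 f U) (hx : x ∈ U) (hT : 0 ≤ T) :
    ∃ K ⊆ U, IsCompact K ∧ ∀ᶠ y in 𝓝 x, MapsTo (φ · y) (Icc 0 T) K := by
  have hφx := hφ.isTrajectory x hx T
  have horbit : IsCompact ((φ · x) '' Icc 0 T) :=
    isCompact_Icc.image_of_continuousOn hφx.continuousOn
  obtain ⟨δ, hδ, hδU⟩ := horbit.exists_cthickening_subset_open hU hφx.mapsTo.image_subset
  set K := cthickening δ ((φ · x) '' Icc 0 T)
  have hK : IsCompact K := horbit.cthickening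
  obtain ⟨g, C, L, hgC, hgL, hgf⟩ := exists_lipschitzWith_bounded_eventuallyEq hU hf hK hδU
  have hgf : EqOn g f K := Eventually.self_of_nhdsSet hgf
  have hφx_g : IsTrajectory g univ T (φ · x) :=
    ((hφx.restrict fun t ht ↦ self_subset_cthickening _ (mem_image_of_mem _ ht)).congr
      hgf.symm).mono_set (subset_univ K)
  have hclose : ∀ᶠ y in 𝓝 x, dist y x * Real.exp (C * T) < δ :=
    ContinuousAt.eventually_lt (by fun_prop) continuousAt_const (by simpa using hδ)
  refine ⟨K, hδU, hK, ?_⟩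
  filter_upwards [hclose, hU.mem_nhds hx] with y hyδ hy
  obtain ⟨w, rfl, hw⟩ := exists_isTrajectory_univ_of_lipschitzWith hgC hgL y hT
  have hwK : MapsTo w (Icc 0 T) K := fun t ht ↦ by
    refine mem_cthickening_of_dist_le _ _ _ _ (mem_image_of_mem _ ht) ?_
    calc dist (w t) (φ t x) ≤ dist (w 0) x * Real.exp (C * t) := by
          simpa only [hφ.map_zero x hx] using hw.dist_le hgC.lipschitzOnWith hφx_g ht
      _ ≤ dist (w 0) x * Real.exp (C * T) := by gcongr; exact ht.2
      _ ≤ δ := hyδ.le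
  intro t ht
  have hwf : IsTrajectory f U t w := (((hw.restrict hwK).congr hgf).mono_set hδU).mono ht.2
  have hwφ : w t = φ t (w 0) :=
    hφ.eq_of_isTrajectory (locallyLipschitzOn_of_contDiffOn hU hf) hwf hy ht.1
  simpa only [hwφ] using hwK ht

theorem continuousOn [FiniteDimensional ℝ E] (hφ : IsSemiflow f U φ) (hU : IsOpen U)
    (hf : ContDiffOn ℝ 1 f U) (ht : 0 ≤ t) : ContinuousOn (φ t) U := by
  refine fun x hx ↦ ContinuousAt.continuousWithinAt (tendsto_iff_dist_tendsto_zero.2 ?_)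
  obtain ⟨K, hKU, hK, hφK⟩ := hφ.exists_isCompact_eventually_mapsTo hU hf hx ht
  obtain ⟨C, hC⟩ := LocallyLipschitzOn.exists_lipschitzOnWith_of_compact hK
    ((locallyLipschitzOn_of_contDiffOn hU hf).mono hKU)
  have hbound : ∀ᶠ y in 𝓝 x, dist (φ t y) (φ t x) ≤ dist y x * Real.exp (C * t) := by
    filter_upwards [hφK, hU.mem_nhds hx] with y hyK hy
    simpa only [hφ.map_zero y hy, hφ.map_zero x hx] using
      ((hφ.isTrajectory y hy t).restrict hyK).dist_le hC
        ((hφ.isTrajectory x hx t).restrict hφK.self_of_nhds) (right_mem_Icc.2 ht)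
  have hzero : Tendsto (fun y ↦ dist y x * Real.exp (C * t)) (𝓝 x) (𝓝 0) :=
    ContinuousAt.tendsto (by fun_prop) |>.trans (by simp)
  exact squeeze_zero' (.of_forall fun _ ↦ dist_nonneg) hbound hzero

theorem tendstoLocallyUniformlyOn [FiniteDimensional ℝ E] (hφ : IsSemiflow f U φ)
    (hU : IsOpen U) (hf : ContDiffOn ℝ 1 f U) (ht : 0 ≤ t) :
    TendstoLocallyUniformlyOn φ (φ t) (𝓝[Ici 0] t) U := by
  refine Metric.tendstoLocallyUniformlyOn_iff.2 fun ε hε x hx ↦ ?_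
  obtain ⟨K, hKU, hK, hφK⟩ := hφ.exists_isCompact_eventually_mapsTo hU hf hx
    (T := t + 1) (by positivity)
  obtain ⟨C, hC⟩ := hK.exists_bound_of_continuousOn (hf.continuousOn.mono hKU)
  have hsmall : ∀ᶠ s in 𝓝[Ici 0] t, C * ‖t - s‖ < ε ∧ s ≤ t + 1 :=
    nhdsWithin_le_nhds <| (ContinuousAt.eventually_lt (by fun_prop) continuousAt_const
      (by simpa using hε)).and (Iic_mem_nhds (lt_add_one t))
  refine ⟨_, nhdsWithin_le_nhds (hφK.and (hU.mem_nhds hx)), ?_⟩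
  filter_upwards [hsmall, self_mem_nhdsWithin] with s hs hs₀ y hy
  rw [dist_eq_norm]
  refine ((convex_Icc 0 (t + 1)).norm_image_sub_le_of_norm_hasDerivWithin_le
    (hφ.isTrajectory y hy.2 (t + 1)).isIntegralCurveOn (fun u hu ↦ hC _ (hy.1 hu)) ⟨hs₀, hs.2⟩
    ⟨ht, by simp⟩).trans_lt hs.1

end IsSemiflow

end Trajectories

section HolomorphicFields

lemma eq_mul_exp_integral_of_hasDerivWithinAt {a b : ℝ} {u h : ℝ → ℂ} (hab : a ≤ b)
    (hh : ContinuousOn h (Icc a b))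
    (hu : ∀ t ∈ Icc a b, HasDerivWithinAt u (h t * u t) (Icc a b) t) :
    u b = u a * exp (∫ t in a..b, h t) := by
  have hderiv : ∀ t ∈ Icc a b,
      HasDerivWithinAt (fun t ↦ u t * exp (-∫ s in a..t, h s)) 0 (Icc a b) t := fun t ht ↦ by
    have : Fact (t ∈ Icc a b) := ⟨ht⟩
    have hH : HasDerivWithinAt (fun t ↦ ∫ s in a..t, h s) (h t) (Icc a b) t :=
      intervalIntegral.integral_hasDerivWithinAt_right
        ((hh.mono (Icc_subset_Icc_right ht.2)).intervalIntegrable_of_Icc ht.1)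
        (hh.stronglyMeasurableAtFilter_nhdsWithin measurableSet_Icc t) (hh t ht)
    exact ((hu t ht).mul hH.neg.cexp).congr_deriv (by ring)
  have hconst := constant_of_has_deriv_right_zero
    (fun t ht ↦ (hderiv t ht).continuousWithinAt)
    (fun t ht ↦ (hderiv t (Ico_subset_Icc_self ht)).mono_of_mem_nhdsWithin
      (Icc_mem_nhdsGE_of_mem ht)) b (right_mem_Icc.2 hab)
  rw [intervalIntegral.integral_same, neg_zero, exp_zero, mul_one] at hconst
  rw [← hconst, mul_assoc, ← exp_add, neg_add_cancel, exp_zero, mul_one]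

lemma contDiffOn_real_of_differentiableOn {G : ℂ → ℂ} {U : Set ℂ} (hU : IsOpen U)
    (hG : DifferentiableOn ℂ G U) : ContDiffOn ℝ 1 G U :=
  (hG.contDiffOn hU).restrict_scalars ℝ

namespace IsSemiflow

variable {G : ℂ → ℂ} {U : Set ℂ} {φ : ℝ → ℂ → ℂ} {z a : ℂ} {T : ℝ}

lemma continuousOn_slope (hφ : IsSemiflow G U φ) (hG : LocallyLipschitzOn U G)
    (hz : z ∈ U) (ha : a ∈ U) (haz : a ≠ z) :
    ContinuousOn (fun t ↦ slope G (φ t z) (φ t a)) (Icc 0 T) := by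
  have hz_cont := (hφ.isTrajectory z hz T).continuousOn
  have ha_cont := (hφ.isTrajectory a ha T).continuousOn
  have hG_cont := hG.continuousOn
  refine ContinuousOn.smul (ContinuousOn.inv₀ (ha_cont.sub hz_cont) fun t ht ↦ ?_) ?_
  · exact sub_ne_zero.2 ((hφ.injOn hG ht.1).ne ha hz haz)
  · exact (hG_cont.comp ha_cont (hφ.isTrajectory a ha T).mapsTo).sub
      (hG_cont.comp hz_cont (hφ.isTrajectory z hz T).mapsTo)

lemma slope_eq_exp_integral_slope (hφ : IsSemiflow G U φ) (hG : LocallyLipschitzOn U G)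
    (hz : z ∈ U) (ha : a ∈ U) (haz : a ≠ z) (hT : 0 ≤ T) :
    slope (φ T) z a = exp (∫ t in 0..T, slope G (φ t z) (φ t a)) := by
  have hsub : ∀ t ∈ Icc 0 T, HasDerivWithinAt (fun t ↦ φ t a - φ t z)
      (slope G (φ t z) (φ t a) * (φ t a - φ t z)) (Icc 0 T) t := fun t ht ↦ by
    refine (((hφ.isTrajectory a ha T).isIntegralCurveOn t ht).sub
      ((hφ.isTrajectory z hz T).isIntegralCurveOn t ht)).congr_deriv ?_
    rw [mul_comm, ← smul_eq_mul, sub_smul_slope, vsub_eq_sub]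
  have hexp := eq_mul_exp_integral_of_hasDerivWithinAt hT (hφ.continuousOn_slope hG hz ha haz) hsub
  rw [hφ.map_zero a ha, hφ.map_zero z hz] at hexp
  rw [slope_def_field, hexp, mul_div_cancel_left₀ _ (sub_ne_zero.2 haz)]

/-- As `a → z` the difference quotients converge pointwise along the orbit of `z`, and they are
dominated by a Lipschitz constant of `G` near that orbit. -/
lemma tendsto_integral_slope (hφ : IsSemiflow G U φ) (hU : IsOpen U) (hG : DifferentiableOn ℂ G U)
    (hz : z ∈ U) (hT : 0 ≤ T) :
    Tendsto (fun a ↦ ∫ t in 0..T, slope G (φ t z) (φ t a)) (𝓝[≠] z)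
      (𝓝 (∫ t in 0..T, deriv G (φ t z))) := by
  have hG₁ := contDiffOn_real_of_differentiableOn hU hG
  have hGL := locallyLipschitzOn_of_contDiffOn hU hG₁
  obtain ⟨K, hKU, hK, hφK⟩ := hφ.exists_isCompact_eventually_mapsTo hU hG₁ hz hT
  obtain ⟨C, hC⟩ := LocallyLipschitzOn.exists_lipschitzOnWith_of_compact hK (hGL.mono hKU)
  have hIoc : uIoc 0 T ⊆ Icc 0 T := uIoc_of_le hT ▸ Ioc_subset_Icc_self
  have ha : ∀ᶠ a in 𝓝[≠] z, a ∈ U ∧ a ≠ z :=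
    Eventually.and (mem_nhdsWithin_of_mem_nhds (hU.mem_nhds hz)) self_mem_nhdsWithin
  refine intervalIntegral.tendsto_integral_filter_of_dominated_convergence (fun _ ↦ C) ?_ ?_
    intervalIntegrable_const (.of_forall fun t ht ↦ ?_)
  · filter_upwards [ha] with a ⟨haU, haz⟩
    exact ((hφ.continuousOn_slope hGL hz haU haz).mono hIoc).aestronglyMeasurable measurableSet_uIoc
  · filter_upwards [nhdsWithin_le_nhds hφK] with a haK
    refine .of_forall fun t ht ↦ ?_
    rw [slope_def_field, norm_div]
    exact div_le_of_le_mul₀ (norm_nonneg _) C.2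
      (hC.norm_sub_le (haK (hIoc ht)) (hφK.self_of_nhds (hIoc ht)))
  · have ht₀ := (hIoc ht).1
    have hderiv := (hG.differentiableAt (hU.mem_nhds (hφ.mapsTo ht₀ hz))).hasDerivAt
    refine hderiv.tendsto_slope.comp (tendsto_nhdsWithin_iff.2 ⟨?_, ?_⟩)
    · exact ((hφ.continuousOn hU hG₁ ht₀).continuousAt (hU.mem_nhds hz)).mono_left
        nhdsWithin_le_nhds
    · filter_upwards [ha] with a ⟨haU, haz⟩ using (hφ.injOn hGL ht₀).ne haU hz haz

theorem hasDerivAt_exp_integral_deriv (hφ : IsSemiflow G U φ) (hU : IsOpen U)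
    (hG : DifferentiableOn ℂ G U) (hz : z ∈ U) (hT : 0 ≤ T) :
    HasDerivAt (φ T) (exp (∫ t in 0..T, deriv G (φ t z))) z := by
  have hGL := locallyLipschitzOn_of_contDiffOn hU (contDiffOn_real_of_differentiableOn hU hG)
  rw [hasDerivAt_iff_tendsto_slope]
  refine (hφ.tendsto_integral_slope hU hG hz hT).cexp.congr' ?_
  filter_upwards [nhdsWithin_le_nhds (hU.mem_nhds hz), self_mem_nhdsWithin] with a haU haz
  exact (hφ.slope_eq_exp_integral_slope hGL hz haU haz hT).symm

end IsSemiflow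

/-- The maps `φ t`, `t ≥ 0`, form a continuous one-parameter semigroup of holomorphic self-maps of
`U` whose orbits are the unique global solutions in `U` of `w' = G w`. The values of `φ` at
negative times and outside `U` are irrelevant. -/
structure GeneratesHolomorphicSemigroup (G : ℂ → ℂ) (U : Set ℂ) (φ : ℝ → ℂ → ℂ) : Prop where
  mapsTo : ∀ t, 0 ≤ t → MapsTo (φ t) U U
  differentiableOn : ∀ t, 0 ≤ t → DifferentiableOn ℂ (φ t) U
  map_zero : ∀ z ∈ U, φ 0 z = z
  map_add : ∀ s t, 0 ≤ s → 0 ≤ t → ∀ z ∈ U, φ (t + s) z = φ s (φ t z)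
  tendstoLocallyUniformlyOn : ∀ t, 0 ≤ t → TendstoLocallyUniformlyOn φ (φ t) (𝓝[Ici 0] t) U
  hasDerivWithinAt : ∀ z ∈ U, ∀ t, 0 ≤ t → HasDerivWithinAt (φ · z) (G (φ t z)) (Ici 0) t
  unique : ∀ z ∈ U, ∀ w : ℝ → ℂ, (∀ t, 0 ≤ t → w t ∈ U) → w 0 = z →
    (∀ t, 0 ≤ t → HasDerivWithinAt w (G (w t)) (Ici 0) t) → ∀ t, 0 ≤ t → w t = φ t z

theorem IsSemicomplete.exists_generatesHolomorphicSemigroup {G : ℂ → ℂ} {U : Set ℂ}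
    (h : IsSemicomplete G U) (hU : IsOpen U) (hG : DifferentiableOn ℂ G U) :
    ∃ φ, GeneratesHolomorphicSemigroup G U φ := by
  have hG₁ := contDiffOn_real_of_differentiableOn hU hG
  have hGL := locallyLipschitzOn_of_contDiffOn hU hG₁
  obtain ⟨φ, hφ⟩ := h.exists_isSemiflow hGL
  exact ⟨φ,
    { mapsTo _ := hφ.mapsTo
      differentiableOn _ ht _ hz :=
        (hφ.hasDerivAt_exp_integral_deriv hU hG hz ht).differentiableAt.differentiableWithinAt
      map_zero := hφ.map_zero
      map_add _ _ hs ht _ hz := by rw [add_comm, hφ.map_add hGL hz ht hs]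
      tendstoLocallyUniformlyOn _ := hφ.tendstoLocallyUniformlyOn hU hG₁
      hasDerivWithinAt _ hz _ := hφ.hasDerivWithinAt hz
      unique := by
        rintro _ hz w hwU rfl hw t ht
        exact hφ.eq_of_isTrajectory hGL ⟨fun s hs ↦ (hw s hs.1).mono Icc_subset_Ici_self,
          fun s hs ↦ hwU s hs.1⟩ hz ht }⟩

end HolomorphicFields

section UnitDisk

/-- The field `G` infinitesimally contracts the hyperbolic metric `|dz| / (1 - |z|²)` of the unit
disk: the left-hand side divided by `1 - |z|²` is the logarithmic derivative of the hyperbolic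
length of a tangent vector carried along by the flow of `G`. -/
def ContractsHyperbolic (G : ℂ → ℂ) : Prop :=
  ∀ z ∈ ball (0 : ℂ) 1,
    2 * ((starRingEnd ℂ) z * G z).re + (1 - ‖z‖ ^ 2) * (deriv G z).re ≤ 0

/-- The length of the vector `G z` in the hyperbolic metric `|dz| / (1 - |z|²)` of the unit disk. -/
def hyperbolicSpeed (G : ℂ → ℂ) (z : ℂ) : ℝ := ‖G z‖ / (1 - ‖z‖ ^ 2)

lemma one_sub_norm_sq_pos {E : Type*} [SeminormedAddCommGroup E] {z : E}
    (hz : z ∈ ball (0 : E) 1) : 0 < 1 - ‖z‖ ^ 2 := by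
  rw [sub_pos, sq_lt_one_iff₀ (norm_nonneg z)]
  simpa using hz

lemma hyperbolicSpeed_nonneg (G : ℂ → ℂ) {z : ℂ} (hz : z ∈ ball (0 : ℂ) 1) :
    0 ≤ hyperbolicSpeed G z :=
  div_nonneg (norm_nonneg _) (one_sub_norm_sq_pos hz).le

lemma hasDerivWithinAt_hyperbolicSpeed_sq {G : ℂ → ℂ} {w : ℝ → ℂ} {s : Set ℝ} {t : ℝ}
    (hG : DifferentiableAt ℂ G (w t)) (hw : HasDerivWithinAt w (G (w t)) s t)
    (hwt : w t ∈ ball (0 : ℂ) 1) :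
    HasDerivWithinAt (fun t ↦ hyperbolicSpeed G (w t) ^ 2)
      (2 * hyperbolicSpeed G (w t) ^ 2 / (1 - ‖w t‖ ^ 2) *
        (2 * ((starRingEnd ℂ) (w t) * G (w t)).re +
          (1 - ‖w t‖ ^ 2) * (deriv G (w t)).re)) s t := by
  have hGw : HasDerivWithinAt (fun t ↦ G (w t)) (deriv G (w t) * G (w t)) s t :=
    hG.hasDerivAt.comp_hasDerivWithinAt t hw
  have hinner₁ : inner ℝ (w t) (G (w t)) = ((starRingEnd ℂ) (w t) * G (w t)).re := by
    rw [Complex.inner, mul_comm]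
  have hinner₂ : inner ℝ (G (w t)) (deriv G (w t) * G (w t)) =
      ‖G (w t)‖ ^ 2 * (deriv G (w t)).re := by
    rw [Complex.inner, mul_assoc, mul_conj, normSq_eq_norm_sq, mul_comm, re_ofReal_mul]
  have hne := (one_sub_norm_sq_pos hwt).ne'
  have hquot := hGw.norm_sq.div ((hw.norm_sq.const_sub 1).pow 2) (pow_ne_zero 2 hne)
  simp only [hyperbolicSpeed, div_pow]
  refine hquot.congr_deriv ?_
  rw [hinner₁, hinner₂]
  simp only [Pi.pow_apply]
  field_simp
  ring

lemma IsTrajectory.one_sub_norm_sq_mul_exp_le {E : Type*} [NormedAddCommGroup E]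
    [InnerProductSpace ℝ E] {f : E → E} {T C t : ℝ} {w : ℝ → E} (hw : IsTrajectory f (ball 0 1) T w)
    (hC : ∀ t ∈ Icc 0 T, ‖f (w t)‖ ≤ C * (1 - ‖w t‖ ^ 2)) (ht : t ∈ Icc 0 T) :
    (1 - ‖w 0‖ ^ 2) * Real.exp (-(2 * C * t)) ≤ 1 - ‖w t‖ ^ 2 := by
  have hderiv := fun u (hu : u ∈ Icc 0 T) ↦
    ((hw.isIntegralCurveOn u hu).norm_sq.const_sub 1).mul
      (((hasDerivAt_id u).const_mul (2 * C)).exp.hasDerivWithinAt)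
  have hmono : MonotoneOn (fun u ↦ (1 - ‖w u‖ ^ 2) * Real.exp (2 * C * u)) (Icc 0 T) := by
    refine monotoneOn_of_hasDerivWithinAt_nonneg (convex_Icc 0 T)
      (fun u hu ↦ (hderiv u hu).continuousWithinAt)
      (fun u hu ↦ (hderiv u (interior_subset hu)).mono interior_subset) fun u hu ↦ ?_
    have hu := interior_subset hu
    have hinner : inner ℝ (w u) (f (w u)) ≤ C * (1 - ‖w u‖ ^ 2) :=
      calc inner ℝ (w u) (f (w u)) ≤ ‖w u‖ * ‖f (w u)‖ := real_inner_le_norm _ _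
        _ ≤ ‖f (w u)‖ := mul_le_of_le_one_left (norm_nonneg _)
            (mem_ball_zero_iff.1 (hw.mapsTo hu)).le
        _ ≤ C * (1 - ‖w u‖ ^ 2) := hC u hu
    have hfactor : 0 ≤ 2 * (C * (1 - ‖w u‖ ^ 2) - inner ℝ (w u) (f (w u))) *
        Real.exp (2 * C * u) := by
      have := sub_nonneg.2 hinner
      positivity
    exact hfactor.trans_eq (by simp only [id_eq]; ring)
  have hle := hmono ⟨le_rfl, ht.1.trans ht.2⟩ ht ht.1
  rw [Real.exp_neg, ← div_eq_mul_inv, div_le_iff₀ (Real.exp_pos _)]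
  simpa using hle

namespace ContractsHyperbolic

variable {G : ℂ → ℂ} {T t : ℝ} {w : ℝ → ℂ}

lemma hyperbolicSpeed_le (hc : ContractsHyperbolic G) (hG : DifferentiableOn ℂ G (ball 0 1))
    (hw : IsTrajectory G (ball 0 1) T w) (ht : t ∈ Icc 0 T) :
    hyperbolicSpeed G (w t) ≤ hyperbolicSpeed G (w 0) := by
  have h₀ : (0 : ℝ) ∈ Icc 0 T := ⟨le_rfl, ht.1.trans ht.2⟩
  have hderiv := fun u (hu : u ∈ Icc 0 T) ↦ hasDerivWithinAt_hyperbolicSpeed_sq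
    (hG.differentiableAt (isOpen_ball.mem_nhds (hw.mapsTo hu))) (hw.isIntegralCurveOn u hu)
    (hw.mapsTo hu)
  have hanti : AntitoneOn (fun u ↦ hyperbolicSpeed G (w u) ^ 2) (Icc 0 T) :=
    antitoneOn_of_hasDerivWithinAt_nonpos (convex_Icc 0 T)
      (fun u hu ↦ (hderiv u hu).continuousWithinAt)
      (fun u hu ↦ (hderiv u (interior_subset hu)).mono interior_subset) fun u hu ↦ by
        have hwu := hw.mapsTo (interior_subset hu)
        have := one_sub_norm_sq_pos hwu
        exact mul_nonpos_of_nonneg_of_nonpos (by positivity) (hc _ hwu)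
  exact (sq_le_sq₀ (hyperbolicSpeed_nonneg G (hw.mapsTo ht))
    (hyperbolicSpeed_nonneg G (hw.mapsTo h₀))).1 (hanti h₀ ht ht.1)

lemma norm_le (hc : ContractsHyperbolic G) (hG : DifferentiableOn ℂ G (ball 0 1))
    (hw : IsTrajectory G (ball 0 1) T w) (ht : t ∈ Icc 0 T) :
    ‖G (w t)‖ ≤ hyperbolicSpeed G (w 0) * (1 - ‖w t‖ ^ 2) :=
  (div_le_iff₀ (one_sub_norm_sq_pos (hw.mapsTo ht))).1 (hc.hyperbolicSpeed_le hG hw ht)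

theorem isSemicomplete (hc : ContractsHyperbolic G) (hG : DifferentiableOn ℂ G (ball 0 1)) :
    IsSemicomplete G (ball 0 1) := by
  refine isSemicomplete_of_forall_exists_isCompact isOpen_ball
    (contDiffOn_real_of_differentiableOn isOpen_ball hG) fun z hz T ↦ ?_
  set C := hyperbolicSpeed G z
  have hC : 0 ≤ C := hyperbolicSpeed_nonneg G hz
  have hz' := one_sub_norm_sq_pos hz
  set δ := (1 - ‖z‖ ^ 2) * Real.exp (-(2 * C * T))
  have hδ : 0 < δ := mul_pos hz' (Real.exp_pos _)
  refine ⟨closedBall 0 √(1 - δ), closedBall_subset_ball ?_, isCompact_closedBall _ _, ?_⟩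
  · rw [Real.sqrt_lt' one_pos]
    linarith
  · rintro S hS w rfl hw
    have hS' : S ∈ Icc 0 S := right_mem_Icc.2 hS.1
    have hδS : δ ≤ 1 - ‖w S‖ ^ 2 :=
      calc (1 - ‖w 0‖ ^ 2) * Real.exp (-(2 * C * T))
        _ ≤ (1 - ‖w 0‖ ^ 2) * Real.exp (-(2 * C * S)) := by
            gcongr
            exact hS.2
        _ ≤ 1 - ‖w S‖ ^ 2 := hw.one_sub_norm_sq_mul_exp_le (fun t ↦ hc.norm_le hG hw) hS'
    rw [mem_closedBall_zero_iff]
    exact Real.le_sqrt_of_sq_le (by linarith)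

end ContractsHyperbolic

/-- The automorphism of the unit disk that maps `0` to `a`. -/
def diskAutomorphism (a ζ : ℂ) : ℂ := (ζ + a) / (1 + (starRingEnd ℂ) a * ζ)

lemma norm_add_lt_norm_one_add_conj_mul {a ζ : ℂ} (ha : ‖a‖ < 1) (hζ : ‖ζ‖ < 1) :
    ‖ζ + a‖ < ‖1 + (starRingEnd ℂ) a * ζ‖ := by
  have hid : ‖1 + (starRingEnd ℂ) a * ζ‖ ^ 2 - ‖ζ + a‖ ^ 2 = (1 - ‖a‖ ^ 2) * (1 - ‖ζ‖ ^ 2) := by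
    simp only [← normSq_eq_norm_sq, normSq_apply, add_re, add_im, mul_re, mul_im, conj_re, conj_im,
      one_re, one_im]
    ring
  rw [← sq_lt_sq₀ (norm_nonneg _) (norm_nonneg _), ← sub_pos, hid]
  exact mul_pos (one_sub_norm_sq_pos (by simpa using ha)) (one_sub_norm_sq_pos (by simpa using hζ))

section DiskAutomorphism

variable {a : ℂ}

lemma one_add_conj_mul_ne_zero (ha : a ∈ ball (0 : ℂ) 1) {ζ : ℂ} (hζ : ζ ∈ ball (0 : ℂ) 1) :
    1 + (starRingEnd ℂ) a * ζ ≠ 0 :=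
  norm_pos_iff.1 ((norm_nonneg _).trans_lt
    (norm_add_lt_norm_one_add_conj_mul (by simpa using ha) (by simpa using hζ)))

lemma mapsTo_diskAutomorphism (ha : a ∈ ball (0 : ℂ) 1) :
    MapsTo (diskAutomorphism a) (ball 0 1) (ball 0 1) := fun ζ hζ ↦ by
  rw [mem_ball_zero_iff, diskAutomorphism, norm_div,
    div_lt_one (norm_pos_iff.2 (one_add_conj_mul_ne_zero ha hζ))]
  exact norm_add_lt_norm_one_add_conj_mul (by simpa using ha) (by simpa using hζ)

lemma differentiableOn_diskAutomorphism (ha : a ∈ ball (0 : ℂ) 1) :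
    DifferentiableOn ℂ (diskAutomorphism a) (ball 0 1) :=
  DifferentiableOn.div (by fun_prop) (by fun_prop) fun _ ↦ one_add_conj_mul_ne_zero ha

lemma diskAutomorphism_zero (a : ℂ) : diskAutomorphism a 0 = a := by simp [diskAutomorphism]

lemma hasDerivAt_diskAutomorphism_zero (a : ℂ) :
    HasDerivAt (diskAutomorphism a) ((1 - ‖a‖ ^ 2 : ℝ) : ℂ) 0 := by
  refine (((hasDerivAt_id (0 : ℂ)).add_const a).div
    (((hasDerivAt_id (0 : ℂ)).const_mul ((starRingEnd ℂ) a)).const_add 1) (by simp)).congr_deriv ?_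
  simp [mul_conj']

end DiskAutomorphism

section SchwarzPick

variable {P : ℂ → ℂ}

lemma norm_sub_le_norm_add_conj {a b : ℂ} (ha : 0 ≤ a.re) (hb : 0 ≤ b.re) :
    ‖a - b‖ ≤ ‖a + (starRingEnd ℂ) b‖ := by
  have hid : ‖a + (starRingEnd ℂ) b‖ ^ 2 - ‖a - b‖ ^ 2 = 4 * (a.re * b.re) := by
    simp only [← normSq_eq_norm_sq, normSq_apply, add_re, add_im, sub_re, sub_im, conj_re, conj_im]
    ring
  rw [← sq_le_sq₀ (norm_nonneg _) (norm_nonneg _), ← sub_nonneg, hid]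
  positivity

lemma norm_deriv_zero_le_two_mul_re_of_pos (hP : DifferentiableOn ℂ P (ball 0 1))
    (hpos : ∀ z ∈ ball (0 : ℂ) 1, 0 < (P z).re) : ‖deriv P 0‖ ≤ 2 * (P 0).re := by
  have h₀ : (0 : ℂ) ∈ ball (0 : ℂ) 1 := mem_ball_self one_pos
  set c := (starRingEnd ℂ) (P 0)
  have hne : ∀ z ∈ ball (0 : ℂ) 1, P z + c ≠ 0 := fun z hz h ↦ by
    have := congrArg re h
    simp only [c, add_re, conj_re, zero_re] at this
    linarith [hpos z hz, hpos 0 h₀]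
  set f : ℂ → ℂ := fun z ↦ (P z - P 0) / (P z + c)
  have hf : DifferentiableOn ℂ f (ball 0 1) := (hP.sub_const _).div (hP.add_const _) hne
  have hf_maps : MapsTo f (ball 0 1) (closedBall (f 0) 1) := fun z hz ↦ by
    simp only [f, sub_self, zero_div, mem_closedBall_zero_iff, norm_div]
    exact div_le_one_of_le₀ (norm_sub_le_norm_add_conj (hpos z hz).le (hpos 0 h₀).le)
      (norm_nonneg _)
  have hP₀ := (hP.differentiableAt (isOpen_ball.mem_nhds h₀)).hasDerivAt
  have hf' : HasDerivAt f (deriv P 0 / ((2 * (P 0).re : ℝ) : ℂ)) 0 := by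
    refine ((hP₀.sub_const (P 0)).div (hP₀.add_const c) (hne 0 h₀)).congr_deriv ?_
    rw [← add_conj, sub_self, zero_mul, sub_zero, sq, mul_div_mul_right _ _ (hne 0 h₀)]
  have hschwarz := norm_deriv_le_one_of_mapsTo_ball hf hf_maps one_pos
  have hre : 0 < 2 * (P 0).re := mul_pos two_pos (hpos 0 h₀)
  rwa [hf'.deriv, norm_div, norm_real, Real.norm_of_nonneg hre.le, div_le_one hre] at hschwarz

lemma norm_deriv_zero_le_two_mul_re (hP : DifferentiableOn ℂ P (ball 0 1))
    (hre : ∀ z ∈ ball (0 : ℂ) 1, 0 ≤ (P z).re) : ‖deriv P 0‖ ≤ 2 * (P 0).re := by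
  refine le_of_forall_pos_le_add fun ε hε ↦ ?_
  have := norm_deriv_zero_le_two_mul_re_of_pos (hP.add_const ((ε / 2 : ℝ) : ℂ)) fun z hz ↦ by
    rw [add_re, ofReal_re]
    linarith [hre z hz]
  rw [deriv_add_const, add_re, ofReal_re] at this
  linarith

theorem norm_deriv_mul_le_two_mul_re (hP : DifferentiableOn ℂ P (ball 0 1))
    (hre : ∀ z ∈ ball (0 : ℂ) 1, 0 ≤ (P z).re) {z : ℂ} (hz : z ∈ ball (0 : ℂ) 1) :
    ‖deriv P z‖ * (1 - ‖z‖ ^ 2) ≤ 2 * (P z).re := by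
  have hmaps := mapsTo_diskAutomorphism hz
  have hschwarz := norm_deriv_zero_le_two_mul_re (P := P ∘ diskAutomorphism z)
    (hP.comp (differentiableOn_diskAutomorphism hz) hmaps) fun ζ hζ ↦ hre _ (hmaps hζ)
  have hderiv : HasDerivAt (P ∘ diskAutomorphism z) (deriv P z * ((1 - ‖z‖ ^ 2 : ℝ) : ℂ)) 0 := by
    refine HasDerivAt.comp 0 ?_ (hasDerivAt_diskAutomorphism_zero z)
    rw [diskAutomorphism_zero]
    exact (hP.differentiableAt (isOpen_ball.mem_nhds hz)).hasDerivAt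
  rwa [hderiv.deriv, norm_mul, norm_real, Real.norm_of_nonneg (one_sub_norm_sq_pos hz).le,
    Function.comp_apply, diskAutomorphism_zero] at hschwarz

end SchwarzPick

end UnitDisk

section BerksonPorta

variable {τ : ℂ} {p : ℂ → ℂ}

lemma differentiableOn_berksonPortaField {s : Set ℂ} (hp : DifferentiableOn ℂ p s) :
    DifferentiableOn ℂ (berksonPortaField τ p) s :=
  DifferentiableOn.mul (by fun_prop) hp

lemma deriv_berksonPortaField {z : ℂ} (hp : DifferentiableAt ℂ p z) :
    deriv (berksonPortaField τ p) z =
      ((starRingEnd ℂ) τ * z - 1 + (z - τ) * (starRingEnd ℂ) τ) * p z +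
        (z - τ) * ((starRingEnd ℂ) τ * z - 1) * deriv p z := by
  have h := (((hasDerivAt_id z).sub_const τ).mul
    (((hasDerivAt_id z).const_mul ((starRingEnd ℂ) τ)).sub_const 1)).mul hp.hasDerivAt
  exact h.deriv.trans (by simp)

theorem contractsHyperbolic_berksonPortaField (hp : DifferentiableOn ℂ p (ball 0 1))
    (hre : ∀ z ∈ ball (0 : ℂ) 1, 0 ≤ (p z).re) :
    ContractsHyperbolic (berksonPortaField τ p) := by
  intro z hz
  have hpos := one_sub_norm_sq_pos hz
  set A := ‖z - τ‖
  set B := ‖(starRingEnd ℂ) τ * z - 1‖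
  have hAB : 2 * ((starRingEnd ℂ) z * berksonPortaField τ p z).re + (1 - ‖z‖ ^ 2) *
      (((starRingEnd ℂ) τ * z - 1 + (z - τ) * (starRingEnd ℂ) τ) * p z).re =
      -(A ^ 2 + B ^ 2) * (p z).re := by
    simp only [A, B, berksonPortaField, ← normSq_eq_norm_sq, normSq_apply, add_re,
      add_im, sub_re, sub_im, mul_re, mul_im, conj_re, conj_im, one_re, one_im]
    ring
  have hschwarzPick : (1 - ‖z‖ ^ 2) * ((z - τ) * ((starRingEnd ℂ) τ * z - 1) * deriv p z).re ≤
      2 * A * B * (p z).re :=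
    calc (1 - ‖z‖ ^ 2) * ((z - τ) * ((starRingEnd ℂ) τ * z - 1) * deriv p z).re
      _ ≤ (1 - ‖z‖ ^ 2) * (A * B * ‖deriv p z‖) := by
          gcongr
          exact (re_le_norm _).trans_eq (by rw [norm_mul, norm_mul])
      _ = A * B * (‖deriv p z‖ * (1 - ‖z‖ ^ 2)) := by ring
      _ ≤ A * B * (2 * (p z).re) :=
          mul_le_mul_of_nonneg_left (norm_deriv_mul_le_two_mul_re hp hre hz) (by positivity)
      _ = 2 * A * B * (p z).re := by ring
  calc _ = -(A ^ 2 + B ^ 2) * (p z).re +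
        (1 - ‖z‖ ^ 2) * ((z - τ) * ((starRingEnd ℂ) τ * z - 1) * deriv p z).re := by
        rw [deriv_berksonPortaField (hp.differentiableAt (isOpen_ball.mem_nhds hz)), add_re,
          mul_add, ← add_assoc, hAB]
    _ ≤ -(A ^ 2 + B ^ 2) * (p z).re + 2 * A * B * (p z).re := by gcongr
    _ = -((A - B) ^ 2 * (p z).re) := by ring
    _ ≤ 0 := neg_nonpos.2 (mul_nonneg (sq_nonneg _) (hre z hz))

end BerksonPorta

theorem berkson_porta_generation_general (τ : ℂ) {p : ℂ → ℂ}
    (hp : DifferentiableOn ℂ p (ball 0 1)) (hre : ∀ z ∈ ball (0 : ℂ) 1, 0 ≤ (p z).re) :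
    ∃ φ, GeneratesHolomorphicSemigroup (berksonPortaField τ p) (ball 0 1) φ :=
  ((contractsHyperbolic_berksonPortaField hp hre).isSemicomplete
    (differentiableOn_berksonPortaField hp)).exists_generatesHolomorphicSemigroup isOpen_ball
    (differentiableOn_berksonPortaField hp)

/-- Berkson–Porta theorem (generation direction): if `τ` lies in the closed unit disk
and `p : 𝔻 → ℂ` is holomorphic with `Re p ≥ 0`, then `G(z) = (z−τ)(conj(τ)z−1)p(z)` is
semicomplete: for every `z ∈ 𝔻` the initial value problem `w' = G(w)`, `w 0 = z` has a
unique solution `w_z : [0,∞) → 𝔻`, and `φ_t(z) := w_z(t)` is a one-parameter semigroup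
of holomorphic self-maps of `𝔻` (each `φ_t` holomorphic `𝔻 → 𝔻`, `φ₀ = id`,
`φ_{t+s} = φ_s ∘ φ_t`, and `t ↦ φ_t` continuous for locally uniform convergence). -/
theorem berkson_porta_generation (τ : ℂ) (hτ : τ ∈ Metric.closedBall (0 : ℂ) 1)
    (p : ℂ → ℂ) (hp : DifferentiableOn ℂ p (Metric.ball 0 1))
    (hre : ∀ z ∈ Metric.ball (0 : ℂ) 1, 0 ≤ (p z).re) :
    ∃ φ : ℝ → ℂ → ℂ,
      -- each `φ_t` is a holomorphic self-map of the disk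
      (∀ t : ℝ, 0 ≤ t → Set.MapsTo (φ t) (Metric.ball 0 1) (Metric.ball 0 1) ∧
        DifferentiableOn ℂ (φ t) (Metric.ball 0 1)) ∧
      -- `φ₀ = id`
      (∀ z ∈ Metric.ball (0 : ℂ) 1, φ 0 z = z) ∧
      -- semigroup property `φ_{t+s} = φ_s ∘ φ_t`
      (∀ s t : ℝ, 0 ≤ s → 0 ≤ t → ∀ z ∈ Metric.ball (0 : ℂ) 1,
        φ (t + s) z = φ s (φ t z)) ∧
      -- continuity of `t ↦ φ_t` for locally uniform convergence
      (∀ t₀ : ℝ, 0 ≤ t₀ → TendstoLocallyUniformlyOn (fun t => φ t) (φ t₀)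
        (nhdsWithin t₀ (Set.Ici 0)) (Metric.ball 0 1)) ∧
      -- `t ↦ φ_t z` solves `w' = G(w)`, `w 0 = z`
      (∀ z ∈ Metric.ball (0 : ℂ) 1, ∀ t : ℝ, 0 ≤ t →
        HasDerivWithinAt (fun u => φ u z) (berksonPortaField τ p (φ t z)) (Set.Ici 0) t) ∧
      -- uniqueness of the solution
      (∀ z ∈ Metric.ball (0 : ℂ) 1, ∀ w : ℝ → ℂ,
        (∀ t : ℝ, 0 ≤ t → w t ∈ Metric.ball (0 : ℂ) 1) → w 0 = z →
        (∀ t : ℝ, 0 ≤ t →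
          HasDerivWithinAt w (berksonPortaField τ p (w t)) (Set.Ici 0) t) →
        ∀ t : ℝ, 0 ≤ t → w t = φ t z) := by
  obtain ⟨φ, hφ⟩ := berkson_porta_generation_general τ hp hre
  exact ⟨φ, fun t ht ↦ ⟨hφ.mapsTo t ht, hφ.differentiableOn t ht⟩, hφ.map_zero, hφ.map_add,
    hφ.tendstoLocallyUniformlyOn, hφ.hasDerivWithinAt, hφ.unique⟩

end
end

section
/- Berkson–Porta theorem (representation direction): let (φ_t)_{t≥0} be a one-parameter semigroup of holomorphic self-maps of 𝔻. Then there exist a point τ of the closed unit disk and a holomorphic function p : 𝔻 → ℂ with Re p ≥ 0 on 𝔻 such that, for every z ∈ 𝔻, the map t ↦ φ_t(z) is differentiable on [0, ∞) and satisfies ∂φ_t(z)/∂t = G(φ_t(z)), where G(w) = (w − τ)(conj(τ)·w − 1)·p(w). -/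
open Complex Metric Set

noncomputable section

/-!
Let `G` be the generator of the semigroup. Integrating an orbit over a short time interval gives a
holomorphic function which is locally invertible and differentiable along orbits; composing with its
local inverse shows that the orbits are differentiable and that `G` is holomorphic.

Differentiating the Schwarz–Pick inequality at time `0` gives a differential inequality relating the
values of `G` at two points `z ≠ w`. Apply it at a point `w` where `G w = ε w` with `ε ≥ 0` real and
`|z| ≤ |w|`, or where `G w = 0`: it gives `0 ≤ Re (G z / ((z - w) (conj w * z - 1)))`. If `G` has a
zero in the disk, that zero is `τ`. Otherwise `G` has a continuous logarithm, so that `G w` is a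
positive multiple of `w` somewhere on each circle `|w| = r < 1`, and any limit point `τ` of such `w`
as `r → 1` will do.
-/

open Filter Topology ComplexConjugate

/-! ### Derivatives within sets of real numbers -/

theorem hasDerivWithinAt_integral_Ici {E : Type*} [NormedAddCommGroup E] [NormedSpace ℝ E]
    [CompleteSpace E] {f : ℝ → E} {a t : ℝ} (hf : ContinuousOn f (Ici a)) (ht : a ≤ t) :
    HasDerivWithinAt (fun u => ∫ s in a..u, f s) (f t) (Ici a) t := by
  have hext : Continuous fun s => f (max a s) :=
    hf.comp_continuous (by fun_prop) fun s => le_max_left a s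
  have hderiv := (intervalIntegral.integral_hasDerivAt_right (hext.intervalIntegrable a t)
    (hext.stronglyMeasurableAtFilter _ _) hext.continuousAt).hasDerivWithinAt (s := Ici a)
  rw [max_eq_right ht] at hderiv
  have heq : ∀ u ∈ Ici a, ∫ s in a..u, f s = ∫ s in a..u, f (max a s) := fun u hu =>
    intervalIntegral.integral_congr fun s hs => by
      rw [uIcc_of_le hu] at hs
      simp only [max_eq_right hs.1]
  exact hderiv.congr heq (heq t ht)

theorem inner_nonpos_of_hasDerivWithinAt_Ici_of_norm_le {E : Type*} [NormedAddCommGroup E]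
    [InnerProductSpace ℝ E] {f : ℝ → E} {f' : E} {a : ℝ} (hf : HasDerivWithinAt f f' (Ici a) a)
    (hle : ∀ t, a ≤ t → ‖f t‖ ≤ ‖f a‖) : inner ℝ (f a) f' ≤ 0 := by
  have hmax : IsLocalMaxOn (fun t => ‖f t‖ ^ 2) (Ici a) a :=
    IsMaxOn.localize fun t ht => pow_le_pow_left₀ (norm_nonneg _) (hle t ht) 2
  have hcone : (1 : ℝ) ∈ posTangentConeAt (Ici a) a :=
    mem_posTangentConeAt_of_segment_subset <|
      (convex_Ici a).segment_subset self_mem_Ici (by simp)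
  have := hmax.hasFDerivWithinAt_nonpos hf.norm_sq.hasFDerivWithinAt hcone
  simp only [ContinuousLinearMap.toSpanSingleton_apply, one_smul] at this
  linarith

theorem hasDerivWithinAt_of_hasDerivWithinAt_comp {𝕜 𝕜' : Type*} [NontriviallyNormedField 𝕜]
    [NontriviallyNormedField 𝕜'] [CompleteSpace 𝕜'] [NormedAlgebra 𝕜 𝕜'] {f : 𝕜' → 𝕜'}
    {γ : 𝕜 → 𝕜'} {f' c : 𝕜'} {s : Set 𝕜} {t : 𝕜} (hf : HasStrictDerivAt f f' (γ t)) (hf' : f' ≠ 0)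
    (hγ : ContinuousWithinAt γ s t) (hcomp : HasDerivWithinAt (f ∘ γ) c s t) (ht : t ∈ s) :
    HasDerivWithinAt γ (c / f') s t := by
  have hinv : γ =ᶠ[𝓝[s] t] hf.localInverse f f' (γ t) hf' ∘ (f ∘ γ) :=
    (hγ.eventually (hf.eventually_left_inverse hf')).mono fun _ hu => hu.symm
  rw [div_eq_mul_inv]
  exact ((hf.to_localInverse hf').hasDerivAt.scomp_hasDerivWithinAt t hcomp).congr_of_eventuallyEq
    hinv (hinv.self_of_nhdsWithin ht)

/-! ### Continuous families of holomorphic functions -/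

/-- A family of holomorphic functions on `U`, indexed by `S` and continuous for the topology of
locally uniform convergence. -/
structure IsHolomorphicFamilyOn {X E : Type*} [TopologicalSpace X] [NormedAddCommGroup E]
    [NormedSpace ℂ E] (F : X → ℂ → E) (S : Set X) (U : Set ℂ) : Prop where
  differentiableOn : ∀ t ∈ S, DifferentiableOn ℂ (F t) U
  tendstoLocallyUniformlyOn : ∀ t ∈ S, TendstoLocallyUniformlyOn F (F t) (𝓝[S] t) U

namespace IsHolomorphicFamilyOn

variable {X E : Type*} [TopologicalSpace X] [NormedAddCommGroup E] [NormedSpace ℂ E]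
  {F : X → ℂ → E} {S T : Set X} {U : Set ℂ} {z : ℂ}

theorem mono (hF : IsHolomorphicFamilyOn F S U) (hT : T ⊆ S) : IsHolomorphicFamilyOn F T U where
  differentiableOn t ht := hF.differentiableOn t (hT ht)
  tendstoLocallyUniformlyOn t ht u hu x hx :=
    let ⟨V, hV, h⟩ := hF.tendstoLocallyUniformlyOn t (hT ht) u hu x hx
    ⟨V, hV, nhdsWithin_mono t hT h⟩

theorem continuousOn_eval (hF : IsHolomorphicFamilyOn F S U) (hz : z ∈ U) :
    ContinuousOn (fun t => F t z) S :=
  fun t ht => (hF.tendstoLocallyUniformlyOn t ht).tendsto_at hz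

theorem continuousOn_uncurry (hF : IsHolomorphicFamilyOn F S U) :
    ContinuousOn (Function.uncurry F) (S ×ˢ U) := by
  rintro ⟨t, z⟩ ⟨ht, hz⟩
  rw [ContinuousWithinAt, nhdsWithin_prod_eq]
  have hlim : TendstoLocallyUniformlyOn (fun x : X × ℂ => F x.1) (F t) (𝓝[S] t ×ˢ 𝓝[U] z) U :=
    fun u hu x hx =>
      let ⟨V, hV, h⟩ := hF.tendstoLocallyUniformlyOn t ht u hu x hx
      ⟨V, hV, tendsto_fst.eventually h⟩
  exact hlim.tendsto_comp ((hF.differentiableOn t ht).continuousOn z hz) hz tendsto_snd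

protected theorem deriv [CompleteSpace E] (hF : IsHolomorphicFamilyOn F S U) (hU : IsOpen U) :
    IsHolomorphicFamilyOn (fun t => deriv (F t)) S U where
  differentiableOn t ht := (hF.differentiableOn t ht).deriv hU
  tendstoLocallyUniformlyOn t ht := (hF.tendstoLocallyUniformlyOn t ht).deriv
    (eventually_mem_nhdsWithin.mono hF.differentiableOn) hU

theorem hasDerivAt_integral [CompleteSpace E] {F : ℝ → ℂ → E} {a b : ℝ}
    (hF : IsHolomorphicFamilyOn F (uIcc a b) U) (hU : IsOpen U) (hz : z ∈ U) :
    HasDerivAt (fun w => ∫ s in a..b, F s w) (∫ s in a..b, deriv (F s) z) z := by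
  obtain ⟨r, hr, hrU⟩ := nhds_basis_closedBall.mem_iff.mp (hU.mem_nhds hz)
  obtain ⟨M, hM⟩ := (isCompact_uIcc.prod (isCompact_closedBall z r)).exists_bound_of_continuousOn
    ((hF.deriv hU).continuousOn_uncurry.mono (prod_mono_right hrU))
  have hmeas {G : ℝ → ℂ → E} (hG : IsHolomorphicFamilyOn G (uIcc a b) U) {w : ℂ} (hw : w ∈ U) :=
    ((hG.continuousOn_eval hw).intervalIntegrable (μ := MeasureTheory.volume)).def'.1
  refine (intervalIntegral.hasDerivAt_integral_of_dominated_loc_of_deriv_le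
    (F' := fun w s => deriv (F s) w) (bound := fun _ => M) (ball_mem_nhds z hr) ?_
    (hF.continuousOn_eval hz).intervalIntegrable (hmeas (hF.deriv hU) hz) ?_
    intervalIntegrable_const ?_).2
  · filter_upwards [hU.mem_nhds hz] with w hw using hmeas hF hw
  · exact .of_forall fun s hs w hw => hM (s, w) ⟨uIoc_subset_uIcc hs, ball_subset_closedBall hw⟩
  · exact .of_forall fun s hs w hw =>
      ((hF.differentiableOn s (uIoc_subset_uIcc hs)).differentiableAt
        (hU.mem_nhds (hrU (ball_subset_closedBall hw)))).hasDerivAt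

end IsHolomorphicFamilyOn

/-! ### The generator of a semigroup -/

/-- A one-parameter semigroup of holomorphic self-maps of `U`; only the values `φ t z` with `0 ≤ t`
and `z ∈ U` matter. -/
structure IsHolomorphicSemigroupOn (φ : ℝ → ℂ → ℂ) (U : Set ℂ) : Prop
    extends IsHolomorphicFamilyOn φ (Ici 0) U where
  mapsTo : ∀ t, 0 ≤ t → MapsTo (φ t) U U
  zero_apply : ∀ z ∈ U, φ 0 z = z
  add_apply : ∀ s t, 0 ≤ s → 0 ≤ t → ∀ z ∈ U, φ (t + s) z = φ s (φ t z)

/-- The infinitesimal generator of a semigroup: the velocity at time `0` of the orbit of `z`. -/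
def generator (φ : ℝ → ℂ → ℂ) (z : ℂ) : ℂ :=
  derivWithin (fun t => φ t z) (Ici 0) 0

/-- The integral over `[0, h]` of the orbit of `z`. It is as smooth along an orbit as the integral
of a continuous function, which transfers to the orbit itself where it is locally invertible. -/
def orbitIntegral (φ : ℝ → ℂ → ℂ) (h : ℝ) (z : ℂ) : ℂ :=
  ∫ s in (0 : ℝ)..h, φ s z

namespace IsHolomorphicSemigroupOn

variable {φ : ℝ → ℂ → ℂ} {U : Set ℂ} {z : ℂ} {h t : ℝ}

theorem hasDerivAt_orbitIntegral (hφ : IsHolomorphicSemigroupOn φ U) (hU : IsOpen U)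
    (hh : 0 ≤ h) (hz : z ∈ U) :
    HasDerivAt (orbitIntegral φ h) (∫ s in (0 : ℝ)..h, deriv (φ s) z) z :=
  (hφ.mono (uIcc_of_le hh ▸ Icc_subset_Ici_self)).hasDerivAt_integral hU hz

theorem differentiableOn_orbitIntegral (hφ : IsHolomorphicSemigroupOn φ U) (hU : IsOpen U)
    (hh : 0 ≤ h) : DifferentiableOn ℂ (orbitIntegral φ h) U :=
  fun _ hz => (hφ.hasDerivAt_orbitIntegral hU hh hz).differentiableAt.differentiableWithinAt

theorem exists_deriv_orbitIntegral_ne_zero (hφ : IsHolomorphicSemigroupOn φ U) (hU : IsOpen U)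
    (hz : z ∈ U) : ∃ h, 0 < h ∧ deriv (orbitIntegral φ h) z ≠ 0 := by
  have hid : deriv (φ 0) z = 1 := by
    have heq : φ 0 =ᶠ[𝓝 z] id := eventually_of_mem (hU.mem_nhds hz) hφ.zero_apply
    rw [heq.deriv_eq, deriv_id]
  have hderiv := hasDerivWithinAt_integral_Ici ((hφ.deriv hU).continuousOn_eval hz) le_rfl
  rw [hid] at hderiv
  have hne : ∀ᶠ h in 𝓝[>] (0 : ℝ), ∫ s in (0 : ℝ)..h, deriv (φ s) z ≠ 0 := by
    simpa using (hderiv.mono Ioi_subset_Ici_self).eventually_ne (c := 0) one_ne_zero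
  obtain ⟨h, hne, hh⟩ := (hne.and self_mem_nhdsWithin).exists
  exact ⟨h, hh, (hφ.hasDerivAt_orbitIntegral hU (le_of_lt hh) hz).deriv ▸ hne⟩

theorem orbitIntegral_apply (hφ : IsHolomorphicSemigroupOn φ U) (hh : 0 ≤ h) (hz : z ∈ U)
    (ht : 0 ≤ t) : orbitIntegral φ h (φ t z) = orbitIntegral φ (t + h) z - orbitIntegral φ t z := by
  have hint {b : ℝ} (hb : 0 ≤ b) : IntervalIntegrable (φ · z) MeasureTheory.volume 0 b :=
    ((hφ.continuousOn_eval hz).mono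
      (uIcc_of_le hb ▸ Icc_subset_Ici_self)).intervalIntegrable
  calc orbitIntegral φ h (φ t z) = ∫ s in (0 : ℝ)..h, φ (t + s) z :=
        intervalIntegral.integral_congr fun s hs =>
          (hφ.add_apply s t (uIcc_of_le hh ▸ hs).1 ht z hz).symm
    _ = ∫ s in t..(t + h), φ s z := by
        rw [intervalIntegral.integral_comp_add_left (φ · z) t, add_zero]
    _ = orbitIntegral φ (t + h) z - orbitIntegral φ t z :=
        (intervalIntegral.integral_interval_sub_left (hint (add_nonneg ht hh)) (hint ht)).symm

theorem hasDerivWithinAt_orbitIntegral_comp (hφ : IsHolomorphicSemigroupOn φ U) (hh : 0 ≤ h)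
    (hz : z ∈ U) (ht : 0 ≤ t) :
    HasDerivWithinAt (orbitIntegral φ h ∘ fun u => φ u z) (φ h (φ t z) - φ t z) (Ici 0) t := by
  have hcont := hφ.continuousOn_eval hz
  have hshift : HasDerivWithinAt (fun u => orbitIntegral φ (u + h) z) (φ (t + h) z) (Ici 0) t := by
    simpa using! (hasDerivWithinAt_integral_Ici hcont (add_nonneg ht hh)).scomp t
      ((hasDerivWithinAt_id t (Ici 0)).add_const h) fun u hu => add_nonneg hu hh
  rw [← hφ.add_apply h t hh ht z hz]
  exact (hshift.sub (hasDerivWithinAt_integral_Ici hcont ht)).congr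
    (fun u hu => hφ.orbitIntegral_apply hh hz hu) (hφ.orbitIntegral_apply hh hz ht)

theorem hasDerivWithinAt_of_deriv_orbitIntegral_ne_zero (hφ : IsHolomorphicSemigroupOn φ U)
    (hU : IsOpen U) (hh : 0 ≤ h) (hz : z ∈ U) (ht : 0 ≤ t)
    (hne : deriv (orbitIntegral φ h) (φ t z) ≠ 0) :
    HasDerivWithinAt (fun u => φ u z)
      ((φ h (φ t z) - φ t z) / deriv (orbitIntegral φ h) (φ t z)) (Ici 0) t :=
  hasDerivWithinAt_of_hasDerivWithinAt_comp
    ((hφ.differentiableOn_orbitIntegral hU hh).analyticAt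
      (hU.mem_nhds (hφ.mapsTo t ht hz))).hasStrictDerivAt
    hne (hφ.continuousOn_eval hz t ht) (hφ.hasDerivWithinAt_orbitIntegral_comp hh hz ht) ht

theorem generator_eq_div (hφ : IsHolomorphicSemigroupOn φ U) (hU : IsOpen U) (hh : 0 ≤ h)
    (hz : z ∈ U) (hne : deriv (orbitIntegral φ h) z ≠ 0) :
    generator φ z = (φ h z - z) / deriv (orbitIntegral φ h) z := by
  rw [← hφ.zero_apply z hz] at hne
  have hderiv := hφ.hasDerivWithinAt_of_deriv_orbitIntegral_ne_zero hU hh hz le_rfl hne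
  rw [hφ.zero_apply z hz] at hderiv
  exact hderiv.derivWithin (uniqueDiffWithinAt_Ici 0)

theorem hasDerivWithinAt_generator (hφ : IsHolomorphicSemigroupOn φ U) (hU : IsOpen U)
    (hz : z ∈ U) (ht : 0 ≤ t) :
    HasDerivWithinAt (fun u => φ u z) (generator φ (φ t z)) (Ici 0) t := by
  have hw := hφ.mapsTo t ht hz
  obtain ⟨h, hh, hne⟩ := hφ.exists_deriv_orbitIntegral_ne_zero hU hw
  rw [hφ.generator_eq_div hU hh.le hw hne]
  exact hφ.hasDerivWithinAt_of_deriv_orbitIntegral_ne_zero hU hh.le hz ht hne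

theorem differentiableOn_generator (hφ : IsHolomorphicSemigroupOn φ U) (hU : IsOpen U) :
    DifferentiableOn ℂ (generator φ) U := by
  intro z hz
  have hzU := hU.mem_nhds hz
  obtain ⟨h, hh, hne⟩ := hφ.exists_deriv_orbitIntegral_ne_zero hU hz
  have hderiv : DifferentiableAt ℂ (deriv (orbitIntegral φ h)) z :=
    ((hφ.differentiableOn_orbitIntegral hU hh.le).deriv hU).differentiableAt hzU
  have hquot : DifferentiableAt ℂ (fun w => (φ h w - w) / deriv (orbitIntegral φ h) w) z :=
    (((hφ.differentiableOn h hh.le).differentiableAt hzU).sub differentiableAt_id).div hderiv hne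
  refine (hquot.congr_of_eventuallyEq ?_).differentiableWithinAt
  filter_upwards [hzU, hderiv.continuousAt.eventually_ne hne] with w hw hwne
  exact hφ.generator_eq_div hU hh.le hw hwne

end IsHolomorphicSemigroupOn

/-! ### The Schwarz–Pick lemma -/

/-- The Blaschke factor of `w`. For `w` in the unit disk it is an automorphism of the disk, and
`‖blaschkeFactor w z‖` is the pseudo-hyperbolic distance of `w` and `z`. -/
def blaschkeFactor (w z : ℂ) : ℂ :=
  (z - w) / (1 - conj w * z)

theorem one_sub_conj_mul_ne_zero {w z : ℂ} (hw : ‖w‖ ≤ 1) (hz : ‖z‖ < 1) :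
    1 - conj w * z ≠ 0 := by
  have hlt : ‖conj w * z‖ < 1 := by
    rw [norm_mul, norm_conj]
    exact mul_lt_one_of_nonneg_of_lt_one_right hw (norm_nonneg z) hz
  intro h
  rw [← sub_eq_zero.mp h, norm_one] at hlt
  exact lt_irrefl 1 hlt

theorem blaschkeFactor_self (w : ℂ) : blaschkeFactor w w = 0 := by
  simp [blaschkeFactor]

theorem blaschkeFactor_neg_zero (w : ℂ) : blaschkeFactor (-w) 0 = w := by
  simp [blaschkeFactor]

theorem norm_one_sub_conj_mul_sq_sub_norm_sub_sq (w z : ℂ) :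
    ‖1 - conj w * z‖ ^ 2 - ‖z - w‖ ^ 2 = (1 - ‖w‖ ^ 2) * (1 - ‖z‖ ^ 2) := by
  simp only [← normSq_eq_norm_sq, normSq_apply, sub_re, sub_im, mul_re, mul_im, conj_re, conj_im,
    one_re, one_im]
  ring

theorem norm_blaschkeFactor_lt_one {w z : ℂ} (hw : ‖w‖ < 1) (hz : ‖z‖ < 1) :
    ‖blaschkeFactor w z‖ < 1 := by
  have hpos : 0 < (1 - ‖w‖ ^ 2) * (1 - ‖z‖ ^ 2) :=
    mul_pos (sub_pos.mpr (pow_lt_one₀ (norm_nonneg w) hw two_ne_zero))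
      (sub_pos.mpr (pow_lt_one₀ (norm_nonneg z) hz two_ne_zero))
  rw [← norm_one_sub_conj_mul_sq_sub_norm_sub_sq, sub_pos] at hpos
  rw [blaschkeFactor, norm_div, div_lt_one (norm_pos_iff.mpr (one_sub_conj_mul_ne_zero hw.le hz))]
  exact lt_of_pow_lt_pow_left₀ 2 (norm_nonneg _) hpos

theorem mapsTo_blaschkeFactor {w : ℂ} (hw : ‖w‖ < 1) :
    MapsTo (blaschkeFactor w) (ball 0 1) (ball 0 1) := fun _ hz =>
  mem_ball_zero_iff.mpr (norm_blaschkeFactor_lt_one hw (mem_ball_zero_iff.mp hz))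

theorem differentiableOn_blaschkeFactor {w : ℂ} (hw : ‖w‖ ≤ 1) :
    DifferentiableOn ℂ (blaschkeFactor w) (ball 0 1) :=
  DifferentiableOn.div (by fun_prop) (by fun_prop) fun _ hz =>
    one_sub_conj_mul_ne_zero hw (mem_ball_zero_iff.mp hz)

theorem blaschkeFactor_neg_blaschkeFactor {w z : ℂ} (hw : ‖w‖ < 1) (hz : ‖z‖ < 1) :
    blaschkeFactor (-w) (blaschkeFactor w z) = z := by
  have hwz := one_sub_conj_mul_ne_zero hw.le hz
  have hww := one_sub_conj_mul_ne_zero hw.le hw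
  have hnum : blaschkeFactor w z - -w = z * (1 - conj w * w) / (1 - conj w * z) := by
    rw [blaschkeFactor, sub_neg_eq_add, div_add' _ _ _ hwz]
    ring
  have hden : 1 - conj (-w) * blaschkeFactor w z = (1 - conj w * w) / (1 - conj w * z) := by
    rw [blaschkeFactor, map_neg, mul_div_assoc', one_sub_div hwz]
    ring
  rw [blaschkeFactor, hnum, hden, div_div_div_cancel_right₀ hwz, mul_div_cancel_right₀ _ hww]

theorem norm_blaschkeFactor_map_le {f : ℂ → ℂ} (hd : DifferentiableOn ℂ f (ball 0 1))
    (hf : MapsTo f (ball 0 1) (ball 0 1)) {w z : ℂ} (hw : w ∈ ball (0 : ℂ) 1)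
    (hz : z ∈ ball (0 : ℂ) 1) :
    ‖blaschkeFactor (f w) (f z)‖ ≤ ‖blaschkeFactor w z‖ := by
  have hfw := mem_ball_zero_iff.mp (hf hw)
  rw [mem_ball_zero_iff] at hw hz
  have hw' : ‖-w‖ < 1 := by rwa [norm_neg]
  have hfB := hf.comp (mapsTo_blaschkeFactor hw')
  have hschwarz := norm_le_norm_of_mapsTo_ball (f := blaschkeFactor (f w) ∘ f ∘ blaschkeFactor (-w))
    ((differentiableOn_blaschkeFactor hfw.le).comp
      (hd.comp (differentiableOn_blaschkeFactor hw'.le) (mapsTo_blaschkeFactor hw')) hfB)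
    (((mapsTo_blaschkeFactor hfw).comp hfB).mono_right ball_subset_closedBall)
    (by simp only [Function.comp_apply, blaschkeFactor_neg_zero, blaschkeFactor_self])
    (norm_blaschkeFactor_lt_one hw hz)
  simpa only [Function.comp_apply, blaschkeFactor_neg_blaschkeFactor hw hz] using hschwarz

/-! ### Dissipative vector fields on the disk -/

/-- Infinitesimal form of the Schwarz–Pick inequality for a vector field `G` on the unit disk: the
real part is the logarithmic derivative of the pseudo-hyperbolic distance of `z` and `w` when they
move with velocities `G z` and `G w`. -/
def IsHyperbolicallyDissipative (G : ℂ → ℂ) : Prop :=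
  ∀ ⦃z⦄, z ∈ ball (0 : ℂ) 1 → ∀ ⦃w⦄, w ∈ ball (0 : ℂ) 1 → z ≠ w →
    ((G z - G w) / (z - w) + (conj (G w) * z + conj w * G z) / (1 - conj w * z)).re ≤ 0

/-- The factor relating a generator to a function of nonnegative real part in the Berkson–Porta
formula. -/
def berksonPortaKernel (τ z : ℂ) : ℂ :=
  (z - τ) * (conj τ * z - 1)

theorem hasDerivWithinAt_blaschkeFactor {z w : ℝ → ℂ} {z' w' : ℂ} {s : Set ℝ} {t : ℝ}
    (hz : HasDerivWithinAt z z' s t) (hw : HasDerivWithinAt w w' s t) (hne : z t ≠ w t)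
    (hne' : 1 - conj (w t) * z t ≠ 0) :
    HasDerivWithinAt (fun u => blaschkeFactor (w u) (z u))
      (blaschkeFactor (w t) (z t) * ((z' - w') / (z t - w t) +
        (conj w' * z t + conj (w t) * z') / (1 - conj (w t) * z t))) s t := by
  refine ((hz.sub hw).div ((hw.star.mul hz).const_sub 1) hne').congr_deriv ?_
  have hsub : z t - w t ≠ 0 := sub_ne_zero.mpr hne
  simp only [Pi.sub_apply, Pi.mul_apply, star_def, blaschkeFactor]
  field_simp
  ring

theorem isHyperbolicallyDissipative_of_hasDerivWithinAt {φ : ℝ → ℂ → ℂ} {G : ℂ → ℂ}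
    (hmaps : ∀ t, 0 ≤ t → MapsTo (φ t) (ball 0 1) (ball 0 1))
    (hdiff : ∀ t, 0 ≤ t → DifferentiableOn ℂ (φ t) (ball 0 1))
    (hzero : ∀ z ∈ ball (0 : ℂ) 1, φ 0 z = z)
    (hG : ∀ z ∈ ball (0 : ℂ) 1, HasDerivWithinAt (fun t => φ t z) (G z) (Ici 0) 0) :
    IsHyperbolicallyDissipative G := by
  intro z hz w hw hzw
  have hden := one_sub_conj_mul_ne_zero (mem_ball_zero_iff.mp hw).le (mem_ball_zero_iff.mp hz)
  have hderiv := hasDerivWithinAt_blaschkeFactor (hG z hz) (hG w hw)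
    (by rwa [hzero z hz, hzero w hw]) (by rwa [hzero z hz, hzero w hw])
  have hinner := inner_nonpos_of_hasDerivWithinAt_Ici_of_norm_le hderiv fun t ht => by
    simpa only [hzero z hz, hzero w hw] using
      norm_blaschkeFactor_map_le (hdiff t ht) (hmaps t ht) hw hz
  simp only [hzero z hz, hzero w hw] at hinner
  have hpos : 0 < normSq (blaschkeFactor w z) :=
    normSq_pos.mpr (div_ne_zero (sub_ne_zero.mpr hzw) hden)
  rw [Complex.inner, mul_right_comm, mul_conj, re_ofReal_mul] at hinner
  exact nonpos_of_mul_nonpos_right hinner hpos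

theorem half_le_re_inv_one_sub {ζ : ℂ} (hζ : ‖ζ‖ ≤ 1) (hne : ζ ≠ 1) :
    1 / 2 ≤ ((1 - ζ)⁻¹).re := by
  have hpos : 0 < normSq (1 - ζ) := normSq_pos.mpr (sub_ne_zero.mpr hne.symm)
  have hle : normSq ζ ≤ 1 := by
    rw [normSq_eq_norm_sq]
    exact pow_le_one₀ (norm_nonneg ζ) hζ
  rw [inv_re, div_le_div_iff₀ two_pos hpos]
  simp only [normSq_apply, sub_re, sub_im, one_re, one_im] at hle ⊢
  linarith

theorem re_div_sub_add_div_one_sub_nonneg {z w : ℂ} (hzw : ‖z‖ ≤ ‖w‖) (hne : z ≠ w)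
    (hw : ‖w‖ < 1) : 0 ≤ (w / (w - z) + conj w * z / (1 - conj w * z)).re := by
  have hw0 : w ≠ 0 := fun h => hne <| by simpa [h] using hzw
  have hden := one_sub_conj_mul_ne_zero hw.le (hzw.trans_lt hw)
  have hfirst : w / (w - z) = (1 - z / w)⁻¹ := by
    rw [one_sub_div hw0, inv_div]
  have hsecond : conj w * z / (1 - conj w * z) = (1 - conj w * z)⁻¹ - 1 := by
    field_simp
    ring
  have hle : 1 / 2 ≤ ((1 - z / w)⁻¹).re :=
    half_le_re_inv_one_sub (by rw [norm_div]; exact div_le_one_of_le₀ hzw (norm_nonneg w))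
      fun h => hne ((div_eq_one_iff_eq hw0).mp h)
  have hle' : 1 / 2 ≤ ((1 - conj w * z)⁻¹).re :=
    half_le_re_inv_one_sub (by
      rw [norm_mul, norm_conj]
      exact mul_le_one₀ hw.le (norm_nonneg z) (hzw.trans hw.le)) (sub_ne_zero.mp hden).symm
  rw [hfirst, hsecond, add_re, sub_re, one_re]
  linarith

namespace IsHyperbolicallyDissipative

variable {G : ℂ → ℂ} {z w : ℂ}

theorem re_le_mul_re_div_berksonPortaKernel (hG : IsHyperbolicallyDissipative G)
    (hz : z ∈ ball (0 : ℂ) 1) (hw : w ∈ ball (0 : ℂ) 1) (hne : z ≠ w) :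
    (G w / (w - z) + conj (G w) * z / (1 - conj w * z)).re ≤
      (1 - ‖w‖ ^ 2) * (G z / berksonPortaKernel w z).re := by
  have hsub : z - w ≠ 0 := sub_ne_zero.mpr hne
  have hden : 1 - z * conj w ≠ 0 := by
    rw [mul_comm]
    exact one_sub_conj_mul_ne_zero (mem_ball_zero_iff.mp hw).le (mem_ball_zero_iff.mp hz)
  have hsplit : (G z - G w) / (z - w) + (conj (G w) * z + conj w * G z) / (1 - conj w * z) =
      (G w / (w - z) + conj (G w) * z / (1 - conj w * z)) -
        (1 - conj w * w) * (G z / berksonPortaKernel w z) := by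
    rw [berksonPortaKernel, ← neg_sub z w, ← neg_sub 1 (conj w * z)]
    field_simp
    ring
  have hle := hG hz hw hne
  rw [hsplit, conj_mul', sub_re] at hle
  rw [← re_ofReal_mul]
  push_cast
  linarith

theorem re_div_berksonPortaKernel_nonneg (hG : IsHyperbolicallyDissipative G)
    (hz : z ∈ ball (0 : ℂ) 1) (hw : w ∈ ball (0 : ℂ) 1) (hne : z ≠ w)
    (h : 0 ≤ (G w / (w - z) + conj (G w) * z / (1 - conj w * z)).re) :
    0 ≤ (G z / berksonPortaKernel w z).re :=
  nonneg_of_mul_nonneg_right (h.trans (hG.re_le_mul_re_div_berksonPortaKernel hz hw hne))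
    (sub_pos.mpr (pow_lt_one₀ (norm_nonneg w) (mem_ball_zero_iff.mp hw) two_ne_zero))

theorem re_div_berksonPortaKernel_nonneg_of_eq_zero (hG : IsHyperbolicallyDissipative G)
    (hz : z ∈ ball (0 : ℂ) 1) (hw : w ∈ ball (0 : ℂ) 1) (hne : z ≠ w) (hGw : G w = 0) :
    0 ≤ (G z / berksonPortaKernel w z).re :=
  hG.re_div_berksonPortaKernel_nonneg hz hw hne (by simp [hGw])

theorem re_div_berksonPortaKernel_nonneg_of_eq_mul (hG : IsHyperbolicallyDissipative G)
    (hw : w ∈ ball (0 : ℂ) 1) (hzw : ‖z‖ ≤ ‖w‖) (hne : z ≠ w) {ε : ℝ} (hε : 0 ≤ ε)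
    (hGw : G w = ε * w) : 0 ≤ (G z / berksonPortaKernel w z).re := by
  have hw1 := mem_ball_zero_iff.mp hw
  refine hG.re_div_berksonPortaKernel_nonneg (mem_ball_zero_iff.mpr (hzw.trans_lt hw1)) hw hne ?_
  rw [hGw, map_mul, conj_ofReal, mul_assoc, mul_div_assoc, mul_div_assoc, ← mul_add, re_ofReal_mul]
  exact mul_nonneg hε (re_div_sub_add_div_one_sub_nonneg hzw hne hw1)

end IsHyperbolicallyDissipative

/-! ### Zeros of planar vector fields -/

theorem exists_eq_int_mul_of_le_sub {X : Type*} [TopologicalSpace X] [PreconnectedSpace X]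
    {a : X → ℝ} {T : ℝ} {x y : X} (ha : Continuous a) (hT : 0 < T) (hxy : T ≤ a x - a y) :
    ∃ (θ : X) (n : ℤ), a θ = n * T := by
  have hle : ⌊a x / T⌋ * T ≤ a x := (le_div_iff₀ hT).mp (Int.floor_le _)
  have hge : a y ≤ ⌊a x / T⌋ * T := by
    linarith [(div_lt_iff₀ hT).mp (Int.lt_floor_add_one (a x / T))]
  obtain ⟨θ, hθ⟩ := mem_range_of_exists_le_of_exists_ge ha ⟨y, hge⟩ ⟨x, hle⟩
  exact ⟨θ, _, hθ⟩

theorem exists_mem_sphere_eq_mul_of_isSimplyConnected {G : ℂ → ℂ} {U : Set ℂ} {c : ℂ} {r : ℝ}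
    (hU : IsOpen U) (hUc : IsSimplyConnected U) (hG : ContinuousOn G U) (hG0 : 0 ∉ G '' U)
    (hr : 0 < r) (hrU : sphere c r ⊆ U) :
    ∃ w ∈ sphere c r, ∃ ε : ℝ, 0 < ε ∧ G w = ε * (w - c) := by
  obtain ⟨g, hg, hexp⟩ := exists_continuousOn_eqOn_exp_comp hUc hU hG hG0
  have hmem (θ : ℝ) : circleMap c r θ ∈ U := hrU (circleMap_mem_sphere c hr.le θ)
  have harg : Continuous fun θ : ℝ => (g (circleMap c r θ)).im - θ :=
    (continuous_im.comp (hg.comp_continuous (continuous_circleMap c r) hmem)).sub continuous_id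
  -- `log G` is single-valued on the circle, so `arg G - θ` drops by `2π` over one turn.
  have hdrop : 2 * Real.pi ≤
      ((g (circleMap c r 0)).im - 0) - ((g (circleMap c r (2 * Real.pi))).im - 2 * Real.pi) := by
    rw [(periodic_circleMap c r).eq]
    linarith
  obtain ⟨θ, n, hθ⟩ := exists_eq_int_mul_of_le_sub harg Real.two_pi_pos hdrop
  refine ⟨_, circleMap_mem_sphere c hr.le θ, Real.exp (g (circleMap c r θ)).re / r,
    div_pos (Real.exp_pos _) hr, ?_⟩
  have him : (g (circleMap c r θ)).im = θ + n * (2 * Real.pi) := by linarith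
  have hr0 : (r : ℂ) ≠ 0 := ofReal_ne_zero.mpr hr.ne'
  calc G (circleMap c r θ) = exp (g (circleMap c r θ)) := (hexp (hmem θ)).symm
    _ = exp (g (circleMap c r θ)).re * exp (θ * I + n * (2 * Real.pi * I)) := by
      rw [← exp_add]
      congr 1
      conv_lhs => rw [← re_add_im (g (circleMap c r θ)), him]
      push_cast
      ring
    _ = (Real.exp (g (circleMap c r θ)).re / r : ℝ) * (circleMap c r θ - c) := by
      rw [exp_add, exp_int_mul_two_pi_mul_I, mul_one, circleMap_sub_center, circleMap_zero]
      push_cast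
      field_simp

/-! ### The Berkson–Porta formula -/

theorem conj_mul_sub_one_ne_zero {τ z : ℂ} (hτ : ‖τ‖ ≤ 1) (hz : ‖z‖ < 1) : conj τ * z - 1 ≠ 0 := by
  rw [← neg_ne_zero, neg_sub]
  exact one_sub_conj_mul_ne_zero hτ hz

theorem berksonPortaKernel_ne_zero {τ z : ℂ} (hτ : ‖τ‖ ≤ 1) (hz : ‖z‖ < 1) (hne : z ≠ τ) :
    berksonPortaKernel τ z ≠ 0 :=
  mul_ne_zero (sub_ne_zero.mpr hne) (conj_mul_sub_one_ne_zero hτ hz)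

theorem exists_differentiableOn_eq_sub_mul {f : ℂ → ℂ} {U : Set ℂ} {τ : ℂ}
    (hf : DifferentiableOn ℂ f U) (hU : IsOpen U) (hτ : τ ∈ U → f τ = 0) :
    ∃ q : ℂ → ℂ, DifferentiableOn ℂ q U ∧ ∀ z ∈ U, f z = (z - τ) * q z := by
  by_cases hmem : τ ∈ U
  · refine ⟨dslope f τ, (differentiableOn_dslope (hU.mem_nhds hmem)).mpr hf, fun z _ => ?_⟩
    rw [← smul_eq_mul, sub_smul_dslope, hτ hmem, sub_zero]
  · have hne {z : ℂ} (hz : z ∈ U) : z - τ ≠ 0 := sub_ne_zero.mpr (ne_of_mem_of_not_mem hz hmem)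
    exact ⟨fun z => f z / (z - τ), hf.div (by fun_prop) fun z hz => hne hz,
      fun z hz => (mul_div_cancel₀ _ (hne hz)).symm⟩

theorem exists_differentiableOn_eq_berksonPortaKernel_mul {f : ℂ → ℂ} {τ : ℂ}
    (hf : DifferentiableOn ℂ f (ball 0 1)) (hτ : ‖τ‖ ≤ 1) (hfτ : τ ∈ ball (0 : ℂ) 1 → f τ = 0) :
    ∃ p : ℂ → ℂ, DifferentiableOn ℂ p (ball 0 1) ∧
      ∀ z ∈ ball (0 : ℂ) 1, f z = berksonPortaKernel τ z * p z := by
  obtain ⟨q, hq, hfq⟩ := exists_differentiableOn_eq_sub_mul hf isOpen_ball hfτ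
  have hne (z : ℂ) (hz : z ∈ ball (0 : ℂ) 1) : conj τ * z - 1 ≠ 0 :=
    conj_mul_sub_one_ne_zero hτ (mem_ball_zero_iff.mp hz)
  refine ⟨fun z => q z / (conj τ * z - 1), hq.div (by fun_prop) hne, fun z hz => ?_⟩
  rw [berksonPortaKernel, mul_assoc, mul_div_cancel₀ _ (hne z hz), hfq z hz]

theorem nonneg_of_continuousOn_of_forall_ne {X : Type*} [TopologicalSpace X] {f : X → ℝ}
    {U : Set X} {τ z : X} [(𝓝[≠] τ).NeBot] (hf : ContinuousOn f U) (hU : IsOpen U)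
    (hnonneg : ∀ z ∈ U, z ≠ τ → 0 ≤ f z) (hz : z ∈ U) : 0 ≤ f z := by
  rcases eq_or_ne z τ with rfl | hne
  · have hlim : Tendsto f (𝓝[≠] z) (𝓝 (f z)) :=
      (hf.continuousAt (hU.mem_nhds hz)).mono_left nhdsWithin_le_nhds
    refine ge_of_tendsto hlim ?_
    filter_upwards [self_mem_nhdsWithin, mem_nhdsWithin_of_mem_nhds (hU.mem_nhds hz)] with w hw hwU
    exact hnonneg w hwU hw
  · exact hnonneg z hz hne

namespace IsHyperbolicallyDissipative

variable {G : ℂ → ℂ}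

theorem exists_norm_eq_one_re_div_berksonPortaKernel_nonneg (hG : IsHyperbolicallyDissipative G)
    (hcont : ContinuousOn G (ball 0 1)) (hne : 0 ∉ G '' ball 0 1) :
    ∃ τ : ℂ, ‖τ‖ = 1 ∧ ∀ z ∈ ball (0 : ℂ) 1, 0 ≤ (G z / berksonPortaKernel τ z).re := by
  obtain ⟨r, -, hr, hr1⟩ := exists_seq_strictMono_tendsto' (zero_lt_one' ℝ)
  have hball : IsSimplyConnected (ball (0 : ℂ) 1) := by
    have := (convex_ball (0 : ℂ) 1).contractibleSpace (nonempty_ball.mpr one_pos)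
    exact inferInstanceAs (SimplyConnectedSpace (ball (0 : ℂ) 1))
  choose w hw ε hε hGw using fun n => exists_mem_sphere_eq_mul_of_isSimplyConnected isOpen_ball
    hball hcont hne (hr n).1 (sphere_subset_ball (hr n).2)
  simp only [mem_sphere_zero_iff_norm, sub_zero] at hw hGw
  have hwball (n : ℕ) : w n ∈ ball (0 : ℂ) 1 := mem_ball_zero_iff.mpr (hw n ▸ (hr n).2)
  obtain ⟨τ, -, u, hu, hlim⟩ := (isCompact_closedBall (0 : ℂ) 1).tendsto_subseq
    fun n => ball_subset_closedBall (hwball n)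
  have hnorm : Tendsto (fun n => ‖w (u n)‖) atTop (𝓝 1) := by
    simpa only [hw, Function.comp_def] using hr1.comp hu.tendsto_atTop
  have hτ : ‖τ‖ = 1 := tendsto_nhds_unique hlim.norm hnorm
  refine ⟨τ, hτ, fun z hz => ?_⟩
  have hz1 := mem_ball_zero_iff.mp hz
  have hker := berksonPortaKernel_ne_zero hτ.le hz1 (ne_of_apply_ne norm (hz1.trans_eq hτ.symm).ne)
  have hcontker : Continuous fun τ => berksonPortaKernel τ z := by
    unfold berksonPortaKernel
    fun_prop
  have hlimre := (continuous_re.tendsto _).comp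
    (tendsto_const_nhds (x := G z) |>.div ((hcontker.tendsto τ).comp hlim) hker)
  refine ge_of_tendsto hlimre ?_
  filter_upwards [hnorm.eventually_const_lt hz1] with n hn
  exact hG.re_div_berksonPortaKernel_nonneg_of_eq_mul (hwball _) hn.le
    (ne_of_apply_ne norm hn.ne) (hε _).le (hGw _)

theorem exists_re_div_berksonPortaKernel_nonneg (hG : IsHyperbolicallyDissipative G)
    (hcont : ContinuousOn G (ball 0 1)) :
    ∃ τ ∈ closedBall (0 : ℂ) 1, (τ ∈ ball (0 : ℂ) 1 → G τ = 0) ∧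
      ∀ z ∈ ball (0 : ℂ) 1, z ≠ τ → 0 ≤ (G z / berksonPortaKernel τ z).re := by
  by_cases hzero : 0 ∈ G '' ball 0 1
  · obtain ⟨τ, hτ, hGτ⟩ := hzero
    exact ⟨τ, ball_subset_closedBall hτ, fun _ => hGτ,
      fun z hz hne => hG.re_div_berksonPortaKernel_nonneg_of_eq_zero hz hτ hne hGτ⟩
  · obtain ⟨τ, hτ, hnonneg⟩ := hG.exists_norm_eq_one_re_div_berksonPortaKernel_nonneg hcont hzero
    exact ⟨τ, mem_closedBall_zero_iff.mpr hτ.le,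
      fun h => absurd hτ (mem_ball_zero_iff.mp h).ne, fun z hz _ => hnonneg z hz⟩

theorem exists_eq_berksonPortaKernel_mul (hG : IsHyperbolicallyDissipative G)
    (hd : DifferentiableOn ℂ G (ball 0 1)) :
    ∃ τ ∈ closedBall (0 : ℂ) 1, ∃ p : ℂ → ℂ, DifferentiableOn ℂ p (ball 0 1) ∧
      (∀ z ∈ ball (0 : ℂ) 1, 0 ≤ (p z).re) ∧
      ∀ z ∈ ball (0 : ℂ) 1, G z = berksonPortaKernel τ z * p z := by
  obtain ⟨τ, hτ, hGτ, hnonneg⟩ := hG.exists_re_div_berksonPortaKernel_nonneg hd.continuousOn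
  rw [mem_closedBall_zero_iff] at hτ
  obtain ⟨p, hp, hGp⟩ := exists_differentiableOn_eq_berksonPortaKernel_mul hd hτ hGτ
  refine ⟨τ, mem_closedBall_zero_iff.mpr hτ, p, hp, fun z hz => ?_, hGp⟩
  have hre : ∀ z ∈ ball (0 : ℂ) 1, z ≠ τ → 0 ≤ (p z).re := fun z hz hne => by
    have hker := berksonPortaKernel_ne_zero hτ (mem_ball_zero_iff.mp hz) hne
    have hquot := hnonneg z hz hne
    rwa [hGp z hz, mul_div_cancel_left₀ _ hker] at hquot
  exact nonneg_of_continuousOn_of_forall_ne (f := fun z => (p z).re)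
    (continuous_re.comp_continuousOn hp.continuousOn) isOpen_ball hre hz

end IsHyperbolicallyDissipative

theorem IsHolomorphicSemigroupOn.isHyperbolicallyDissipative_generator {φ : ℝ → ℂ → ℂ}
    (hφ : IsHolomorphicSemigroupOn φ (ball 0 1)) : IsHyperbolicallyDissipative (generator φ) := by
  refine isHyperbolicallyDissipative_of_hasDerivWithinAt hφ.mapsTo hφ.differentiableOn
    hφ.zero_apply fun z hz => ?_
  simpa only [hφ.zero_apply z hz] using hφ.hasDerivWithinAt_generator isOpen_ball hz le_rfl

/-- Berkson–Porta theorem (representation direction): if `(φ_t)_{t≥0}` is a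
one-parameter semigroup of holomorphic self-maps of the unit disk, then there exist a
point `τ` of the closed unit disk and a holomorphic `p : 𝔻 → ℂ` with `Re p ≥ 0` such
that for every `z ∈ 𝔻` the map `t ↦ φ_t(z)` is differentiable on `[0,∞)` and
`∂φ_t(z)/∂t = G(φ_t(z))` where `G(w) = (w − τ)(conj(τ)w − 1)p(w)`. -/
theorem berkson_porta_representation (φ : ℝ → ℂ → ℂ)
    (hmaps : ∀ t : ℝ, 0 ≤ t →
      Set.MapsTo (φ t) (Metric.ball (0 : ℂ) 1) (Metric.ball 0 1))
    (hhol : ∀ t : ℝ, 0 ≤ t → DifferentiableOn ℂ (φ t) (Metric.ball 0 1))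
    (hid : ∀ z ∈ Metric.ball (0 : ℂ) 1, φ 0 z = z)
    (hsg : ∀ s t : ℝ, 0 ≤ s → 0 ≤ t → ∀ z ∈ Metric.ball (0 : ℂ) 1,
      φ (t + s) z = φ s (φ t z))
    (hcont : ∀ t₀ : ℝ, 0 ≤ t₀ → TendstoLocallyUniformlyOn (fun t => φ t) (φ t₀)
      (nhdsWithin t₀ (Set.Ici 0)) (Metric.ball 0 1)) :
    ∃ τ ∈ Metric.closedBall (0 : ℂ) 1, ∃ p : ℂ → ℂ,
      DifferentiableOn ℂ p (Metric.ball 0 1) ∧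
      (∀ z ∈ Metric.ball (0 : ℂ) 1, 0 ≤ (p z).re) ∧
      ∀ z ∈ Metric.ball (0 : ℂ) 1, ∀ t : ℝ, 0 ≤ t →
        HasDerivWithinAt (fun u => φ u z)
          ((φ t z - τ) * ((starRingEnd ℂ) τ * φ t z - 1) * p (φ t z))
          (Set.Ici 0) t := by
  have hφ : IsHolomorphicSemigroupOn φ (ball 0 1) := ⟨⟨hhol, hcont⟩, hmaps, hid, hsg⟩
  obtain ⟨τ, hτ, p, hp, hre, hG⟩ :=
    hφ.isHyperbolicallyDissipative_generator.exists_eq_berksonPortaKernel_mul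
      (hφ.differentiableOn_generator isOpen_ball)
  refine ⟨τ, hτ, p, hp, hre, fun z hz t ht => ?_⟩
  have hderiv := hφ.hasDerivWithinAt_generator isOpen_ball hz ht
  rwa [hG _ (hφ.mapsTo t ht hz)] at hderiv

end
end
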